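/- arXiv:0906.0887 — 2 statements merged into one kernel-verified Lean document; each statement's English description precedes it below -/
import Mathlib

section
/- (General Lifting.) Let ∑_{i=1}^k αᵢ sᵢ ≥ γ with α ∈ ℝ^k, α ≥ 0, be a valid inequality for conv(P(R,f)) of split rank η with respect to P(R,f)⁰, and let r^{k+1} ∈ ℚ² ∖ {0}. Then there exists α_{k+1} ≥ 0 such that ∑_{i=1}^k αᵢ sᵢ + α_{k+1} s_{k+1} ≥ γ is a valid inequality for conv(P([R r^{k+1}],f)) and has split rank at most η with respect to P([R r^{k+1}],f)⁰. -/
open Set Pointwise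

abbrev Pt : Type := Fin 2 → ℝ

def IsIntPt (x : Pt) : Prop := ∀ j, ∃ z : ℤ, x j = (z : ℝ)

def IsRatPt (x : Pt) : Prop := ∀ j, ∃ q : ℚ, x j = (q : ℝ)

/-- The mixed-integer set `P(R,f)`. -/
def mixedP (k : ℕ) (r : Fin k → Pt) (f : Pt) : Set (Pt × (Fin k → ℝ)) :=
  {p | IsIntPt p.1 ∧ (∀ i, 0 ≤ p.2 i) ∧ p.1 = f + ∑ i, p.2 i • r i}

/-- The linear relaxation `P(R,f)⁰`. -/
def relaxP (k : ℕ) (r : Fin k → Pt) (f : Pt) : Set (Pt × (Fin k → ℝ)) :=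
  {p | (∀ i, 0 ≤ p.2 i) ∧ p.1 = f + ∑ i, p.2 i • r i}

/-- The convex cone generated by a set (all nonnegative combinations). -/
def coneGen (S : Set Pt) : Set Pt :=
  {x | ∃ (n : ℕ) (c : Fin n → ℝ) (v : Fin n → Pt),
    (∀ j, 0 ≤ c j) ∧ (∀ j, v j ∈ S) ∧ x = ∑ j, c j • v j}

/-- The induced lattice-free set `L_α`. -/
def inducedSet (k : ℕ) (r : Fin k → Pt) (f : Pt) (α : Fin k → ℝ) : Set Pt :=
  convexHull ℝ ({f} ∪ {x | ∃ i, 0 < α i ∧ x = f + (α i)⁻¹ • r i}) +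
    coneGen {x | ∃ i, α i = 0 ∧ x = r i}

def LatticeFree (S : Set Pt) : Prop := ∀ x ∈ interior S, ¬ IsIntPt x

/-- Validity of `∑ αᵢ sᵢ ≥ γ` for `conv(P(R,f))`. -/
def ValidIneq (k : ℕ) (r : Fin k → Pt) (f : Pt) (α : Fin k → ℝ) (γ : ℝ) : Prop :=
  ∀ p ∈ mixedP k r f, γ ≤ ∑ i, α i * p.2 i

noncomputable def affDim {V : Type*} [AddCommGroup V] [Module ℝ V] (S : Set V) : ℕ :=
  Module.finrank ℝ (affineSpan ℝ S).direction

/-- Facet-defining inequality: valid and its face of the closed convex hull has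
affine dimension exactly one less. -/
def IsFacet (k : ℕ) (r : Fin k → Pt) (f : Pt) (α : Fin k → ℝ) (γ : ℝ) : Prop :=
  ValidIneq k r f α γ ∧
  affDim {p ∈ closure (convexHull ℝ (mixedP k r f)) | ∑ i, α i * p.2 i = γ} + 1 =
    affDim (convexHull ℝ (mixedP k r f))

def splitClosure (k : ℕ) (C : Set (Pt × (Fin k → ℝ))) : Set (Pt × (Fin k → ℝ)) :=
  ⋂ (π : Fin 2 → ℤ) (π₀ : ℤ),
    convexHull ℝ ((C ∩ {p | ∑ j, (π j : ℝ) * p.1 j ≤ (π₀ : ℝ)}) ∪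
      (C ∩ {p | (π₀ : ℝ) + 1 ≤ ∑ j, (π j : ℝ) * p.1 j}))

def closures (k : ℕ) (r : Fin k → Pt) (f : Pt) : ℕ → Set (Pt × (Fin k → ℝ))
  | 0 => relaxP k r f
  | n + 1 => splitClosure k (closures k r f n)

/-- The split rank of `∑ αᵢ sᵢ ≥ γ` w.r.t. `P(R,f)⁰`: least `j` such that the
inequality is valid on the `j`-th split closure, `⊤` if none exists. -/
noncomputable def splitRank (k : ℕ) (r : Fin k → Pt) (f : Pt) (α : Fin k → ℝ) (γ : ℝ) : ℕ∞ :=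
  sInf {j : ℕ∞ | ∃ n : ℕ, j = (n : ℕ∞) ∧ ∀ p ∈ closures k r f n, γ ≤ ∑ i, α i * p.2 i}

def IsSplitSet (S : Set Pt) : Prop :=
  ∃ (π : Fin 2 → ℤ) (π₀ : ℤ), π ≠ 0 ∧
    S = {x : Pt | (π₀ : ℝ) ≤ ∑ j, (π j : ℝ) * x j ∧ ∑ j, (π j : ℝ) * x j ≤ (π₀ : ℝ) + 1}

/-- Triangle of type `T¹`. -/
def IsT1 (S : Set Pt) : Prop :=
  ∃ v : Fin 3 → Pt, AffineIndependent ℝ v ∧ (∀ i, IsIntPt (v i)) ∧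
    S = convexHull ℝ (Set.range v) ∧
    ∀ i j, i ≠ j → ∃! z, z ∈ openSegment ℝ (v i) (v j) ∧ IsIntPt z

/-- Triangle of type `T^{2A}`. -/
def IsT2A (S : Set Pt) : Prop :=
  ∃ v0 v1 v2 : Pt, AffineIndependent ℝ ![v0, v1, v2] ∧ ¬ IsIntPt v0 ∧
    S = convexHull ℝ {v0, v1, v2} ∧
    (∃ z1 z2 : Pt, z1 ≠ z2 ∧ IsIntPt z1 ∧ IsIntPt z2 ∧
      z1 ∈ segment ℝ v1 v2 ∧ z2 ∈ segment ℝ v1 v2) ∧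
    (∃! z, z ∈ openSegment ℝ v0 v1 ∧ IsIntPt z) ∧
    (∃! z, z ∈ openSegment ℝ v0 v2 ∧ IsIntPt z)

/-- Triangle of type `T^{2B}`. -/
def IsT2B (S : Set Pt) : Prop :=
  ∃ v0 v1 v2 : Pt, AffineIndependent ℝ ![v0, v1, v2] ∧ ¬ IsIntPt v0 ∧
    S = convexHull ℝ {v0, v1, v2} ∧
    (∃ z1 z2 : Pt, z1 ≠ z2 ∧ IsIntPt z1 ∧ IsIntPt z2 ∧
      z1 ∈ segment ℝ v1 v2 ∧ z2 ∈ segment ℝ v1 v2) ∧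
    (∃! z, z ∈ openSegment ℝ v0 v1 ∧ IsIntPt z) ∧
    (∀ z ∈ openSegment ℝ v0 v2, ¬ IsIntPt z)

/-- Triangle of type `T³`. -/
def IsT3 (S : Set Pt) : Prop :=
  ∃ v0 v1 v2 : Pt, AffineIndependent ℝ ![v0, v1, v2] ∧
    ¬ IsIntPt v0 ∧ ¬ IsIntPt v1 ∧ ¬ IsIntPt v2 ∧
    S = convexHull ℝ {v0, v1, v2} ∧
    (∃! z, z ∈ openSegment ℝ v0 v1 ∧ IsIntPt z) ∧
    (∃! z, z ∈ openSegment ℝ v1 v2 ∧ IsIntPt z) ∧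
    (∃! z, z ∈ openSegment ℝ v0 v2 ∧ IsIntPt z) ∧
    (∀ z, IsIntPt z → z ∈ frontier S →
      z ∈ openSegment ℝ v0 v1 ∨ z ∈ openSegment ℝ v1 v2 ∨ z ∈ openSegment ℝ v0 v2)

/-- A quadrilateral with vertices `v 0, v 1, v 2, v 3` in cyclic order; each `vᵢ`
is an extreme point of the hull and each side lies on the boundary. -/
def IsQuadWith (S : Set Pt) (v : Fin 4 → Pt) : Prop :=
  S = convexHull ℝ (Set.range v) ∧
  (∀ i, v i ∈ Set.extremePoints ℝ S) ∧
  (∀ i : Fin 4, segment ℝ (v i) (v (i + 1)) ⊆ frontier S)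

/-- Quadrilateral of type `Q¹`. -/
def IsQ1 (S : Set Pt) : Prop :=
  ∃ v : Fin 4 → Pt, IsQuadWith S v ∧
    (∃ z1 z2 : Pt, z1 ≠ z2 ∧ IsIntPt z1 ∧ IsIntPt z2 ∧
      z1 ∈ segment ℝ (v 0) (v 1) ∧ z2 ∈ segment ℝ (v 0) (v 1)) ∧
    (∃ j : Fin 4, j ≠ 0 ∧
      (∀ i : Fin 4, i ≠ 0 → i ≠ j → ∃ z, IsIntPt z ∧ z ∈ segment ℝ (v i) (v (i + 1))) ∧
      (∀ z ∈ openSegment ℝ (v j) (v (j + 1)), ¬ IsIntPt z)) ∧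
    (∃ T : Set Pt, (IsT1 T ∨ IsT2A T) ∧ S ⊆ T)

/-- Quadrilateral of type `Q²`. -/
def IsQ2 (S : Set Pt) : Prop :=
  ∃ v : Fin 4 → Pt, IsQuadWith S v ∧ (∀ i, ¬ IsIntPt (v i)) ∧
    ∀ i : Fin 4, ∃! z, z ∈ openSegment ℝ (v i) (v (i + 1)) ∧ IsIntPt z

/-- The real vector underlying an integer vector. -/
def intCastVec {ι : Type} (g : ι → ℤ) : ι → ℝ := fun i => (g i : ℝ)

/-- The real linear form with the given integer coefficients. -/
def intForm {ι : Type} [Fintype ι] (h : ι → ℤ) : (ι → ℝ) →ₗ[ℝ] ℝ :=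
  ∑ i, (h i : ℝ) • LinearMap.proj i

theorem intForm_apply {ι : Type} [Fintype ι] (h : ι → ℤ) (z : ι → ℝ) :
    intForm h z = ∑ i, (h i : ℝ) * z i := by
  simp [intForm]

theorem intForm_intCastVec {ι : Type} [Fintype ι] (h g : ι → ℤ) :
    intForm h (intCastVec g) = ((h ⬝ᵥ g : ℤ) : ℝ) := by
  simp [intForm_apply, intCastVec, dotProduct]

/-- The closed half-space `h ≤ 0` bounded by an integer linear form. -/
def intHalfspace {ι : Type} [Fintype ι] (h : ι → ℤ) : PointedCone ℝ (ι → ℝ) where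
  carrier := {z | intForm h z ≤ 0}
  add_mem' {x y} hx hy := by
    simp only [mem_ofPred_eq, map_add] at *
    linarith
  zero_mem' := by simp
  smul_mem' := by
    rintro ⟨c, hc⟩ x hx
    have h1 : intForm h (c • x) = c * intForm h x := by simp
    change intForm h (c • x) ≤ 0
    rw [h1]
    exact mul_nonpos_of_nonneg_of_nonpos hc hx

theorem mem_intHalfspace {ι : Type} [Fintype ι] {h : ι → ℤ} {z : ι → ℝ} :
    z ∈ intHalfspace h ↔ intForm h z ≤ 0 := Iff.rfl

/-- The cone generated by a family of integer vectors. -/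
def intHull {ι J : Type} (g : J → ι → ℤ) : PointedCone ℝ (ι → ℝ) :=
  PointedCone.hull ℝ (range fun j => intCastVec (g j))

theorem intCastVec_mem_intHull {ι J : Type} (g : J → ι → ℤ) (j : J) :
    intCastVec (g j) ∈ intHull g :=
  Submodule.subset_span ⟨j, rfl⟩

theorem intHull_le {ι J : Type} {g : J → ι → ℤ} {C : PointedCone ℝ (ι → ℝ)} :
    intHull g ≤ C ↔ ∀ j, intCastVec (g j) ∈ C := by
  rw [intHull, PointedCone.hull, Submodule.span_le, range_subset_iff]
  rfl

theorem sum_smul_mem_intHull {ι J : Type} [Fintype J] (g : J → ι → ℤ) {c : J → ℝ}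
    (hc : ∀ j, 0 ≤ c j) : ∑ j, c j • intCastVec (g j) ∈ intHull g :=
  Submodule.sum_mem _ fun j _ =>
    PointedCone.smul_mem _ (hc j) (intCastVec_mem_intHull g j)

theorem mem_intHull {ι J : Type} [Fintype J] {g : J → ι → ℤ} {z : ι → ℝ} :
    z ∈ intHull g ↔ ∃ c : J → ℝ, (∀ j, 0 ≤ c j) ∧ z = ∑ j, c j • intCastVec (g j) := by
  constructor
  · intro hz
    obtain ⟨c, hc⟩ := (Submodule.mem_span_range_iff_exists_fun _).1 hz
    exact ⟨fun j => (c j : ℝ), fun j => (c j).2, hc.symm⟩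
  · rintro ⟨c, hc, rfl⟩
    exact sum_smul_mem_intHull g hc

/-- A cone generated by finitely many integer vectors. -/
def IsIntCone {ι : Type} (C : PointedCone ℝ (ι → ℝ)) : Prop :=
  ∃ (J : Type) (_ : Fintype J) (g : J → ι → ℤ), C = intHull g

theorem IsIntCone.sup {ι : Type} {C D : PointedCone ℝ (ι → ℝ)}
    (hC : IsIntCone C) (hD : IsIntCone D) : IsIntCone (C ⊔ D) := by
  obtain ⟨J, _, g, rfl⟩ := hC
  obtain ⟨K, _, h, rfl⟩ := hD
  refine ⟨J ⊕ K, inferInstance, Sum.elim g h, le_antisymm (sup_le ?_ ?_) ?_⟩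
  · exact intHull_le.2 fun j => intCastVec_mem_intHull (Sum.elim g h) (Sum.inl j)
  · exact intHull_le.2 fun j => intCastVec_mem_intHull (Sum.elim g h) (Sum.inr j)
  · refine intHull_le.2 ?_
    rintro (j | j)
    · exact Submodule.mem_sup_left (intCastVec_mem_intHull g j)
    · exact Submodule.mem_sup_right (intCastVec_mem_intHull h j)

/-- Double description: cutting a finitely generated integer cone by an integer half-space keeps
the generators in the half-space and combines the generators of opposite sign in pairs. -/
theorem IsIntCone.inf_intHalfspace {ι : Type} [Fintype ι] {C : PointedCone ℝ (ι → ℝ)}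
    (hC : IsIntCone C) (h : ι → ℤ) : IsIntCone (C ⊓ intHalfspace h) := by
  classical
  obtain ⟨J, _, g, rfl⟩ := hC
  set η : J → ℤ := fun j => h ⬝ᵥ g j with hη
  have hη' : ∀ j, intForm h (intCastVec (g j)) = (η j : ℝ) := fun j => intForm_intCastVec h (g j)
  let g' : J ⊕ J × J → ι → ℤ := Sum.elim (fun j => if η j ≤ 0 then g j else 0)
    (fun p => if 0 < η p.1 ∧ η p.2 < 0 then η p.1 • g p.2 - η p.2 • g p.1 else 0)
  have hzero : intCastVec (0 : ι → ℤ) = 0 := by ext; simp [intCastVec]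
  have hcomb : ∀ p : J × J, intCastVec (η p.1 • g p.2 - η p.2 • g p.1) =
      (η p.1 : ℝ) • intCastVec (g p.2) + (-η p.2 : ℝ) • intCastVec (g p.1) := by
    intro p
    ext i
    simp [intCastVec]
    ring
  refine ⟨J ⊕ J × J, inferInstance, g', le_antisymm ?_ (intHull_le.2 ?_)⟩
  · rintro x ⟨hx, hxh⟩
    obtain ⟨c, hc, rfl⟩ := mem_intHull.1 hx
    replace hxh : ∑ j, c j * (η j : ℝ) ≤ 0 := by
      have := mem_intHalfspace.1 hxh
      simpa [map_sum, hη'] using this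
    have hlow : ∀ j, η j ≤ 0 → intCastVec (g j) ∈ intHull g' := by
      intro j hj
      have := intCastVec_mem_intHull g' (Sum.inl j)
      simpa [g', hj] using this
    have hpair : ∀ i j, 0 < η i → η j < 0 →
        (η i : ℝ) • intCastVec (g j) + (-η j : ℝ) • intCastVec (g i) ∈ intHull g' := by
      intro i j hi hj
      have := intCastVec_mem_intHull g' (Sum.inr (i, j))
      simp only [g', Sum.elim_inr, hi, hj, and_self, if_true] at this
      rwa [hcomb (i, j)] at this
    set p : J → ℝ := fun j => max (η j : ℝ) 0 with hp
    set n : J → ℝ := fun j => max (-η j : ℝ) 0 with hn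
    set ε : J → ℝ := fun j => if η j < 0 then 1 else 0 with hε
    set P := ∑ j, c j * p j with hP
    set N := ∑ j, c j * n j with hN
    have hp0 : ∀ j, 0 ≤ p j := fun j => le_max_right _ _
    have hn0 : ∀ j, 0 ≤ n j := fun j => le_max_right _ _
    have hPN : P ≤ N := by
      have : P - N = ∑ j, c j * (η j : ℝ) := by
        rw [hP, hN, ← Finset.sum_sub_distrib]
        refine Finset.sum_congr rfl fun j _ => ?_
        rw [← mul_sub]
        congr 1
        simp only [hp, hn]
        rcases le_total (η j : ℝ) 0 with hj | hj
        · rw [max_eq_right hj, max_eq_left (by linarith)]; ring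
        · rw [max_eq_left hj, max_eq_right (by linarith)]; ring
      linarith
    have hP0 : 0 ≤ P := Finset.sum_nonneg fun j _ => mul_nonneg (hc j) (hp0 j)
    rcases (hP0.trans hPN).eq_or_lt with hN0 | hNpos
    · have hPz : P = 0 := le_antisymm (hN0 ▸ hPN) hP0
      have hz := (Finset.sum_eq_zero_iff_of_nonneg
        (fun j _ => mul_nonneg (hc j) (hp0 j))).1 hPz
      refine Submodule.sum_mem _ fun j _ => ?_
      by_cases hj : η j ≤ 0
      · exact PointedCone.smul_mem _ (hc j) (hlow j hj)
      · have hpj : 0 < p j := lt_max_of_lt_left (by exact_mod_cast not_le.1 hj)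
        have : c j = 0 := by
          rcases mul_eq_zero.1 (hz j (Finset.mem_univ j)) with h0 | h0
          · exact h0
          · exact absurd h0 hpj.ne'
        rw [this, zero_smul]
        exact Submodule.zero_mem _
    · have key : N • ∑ j, c j • intCastVec (g j) =
          (∑ i, ∑ j, (c i * c j) • (((1 - ε i) * n j) • intCastVec (g i) +
            (p i * ε j) • intCastVec (g j))) +
          (N - P) • ∑ j, (c j * ε j) • intCastVec (g j) := by
        have h1 : ∑ i, ∑ j, (c i * c j) • ((1 - ε i) * n j) • intCastVec (g i) =
            N • ∑ i, (c i * (1 - ε i)) • intCastVec (g i) := by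
          rw [hN, Finset.smul_sum]
          refine Finset.sum_congr rfl fun i _ => ?_
          rw [smul_smul, Finset.sum_mul, Finset.sum_smul]
          refine Finset.sum_congr rfl fun j _ => ?_
          rw [smul_smul]
          congr 1
          ring
        have h2 : ∑ i, ∑ j, (c i * c j) • (p i * ε j) • intCastVec (g j) =
            P • ∑ j, (c j * ε j) • intCastVec (g j) := by
          rw [Finset.sum_comm, hP, Finset.smul_sum]
          refine Finset.sum_congr rfl fun i _ => ?_
          rw [smul_smul, Finset.sum_mul, Finset.sum_smul]
          refine Finset.sum_congr rfl fun j _ => ?_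
          rw [smul_smul]
          congr 1
          ring
        simp only [smul_add, Finset.sum_add_distrib, h1, h2]
        rw [add_assoc, ← add_smul, add_sub_cancel, ← smul_add, ← Finset.sum_add_distrib]
        congr 1
        refine Finset.sum_congr rfl fun j _ => ?_
        rw [← add_smul]
        congr 1
        ring
      rw [← PointedCone.smul_mem_iff _ hNpos, key]
      refine Submodule.add_mem _ (Submodule.sum_mem _ fun i _ => Submodule.sum_mem _ fun j _ => ?_)
        (PointedCone.smul_mem _ (sub_nonneg.2 hPN) (Submodule.sum_mem _ fun j _ => ?_))
      · refine PointedCone.smul_mem _ (mul_nonneg (hc i) (hc j)) ?_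
        rcases lt_trichotomy (η i) 0 with hi | hi | hi
        · have h1 : p i = 0 := max_eq_right (by exact_mod_cast hi.le)
          simp [hε, hi, h1]
        · have h1 : p i = 0 := max_eq_right (by simp [hi])
          simpa [hε, hi, h1] using PointedCone.smul_mem _ (hn0 j) (hlow i hi.le)
        · have h1 : p i = η i := max_eq_left (by exact_mod_cast hi.le)
          by_cases hj : η j < 0
          · have h2 : n j = -η j := max_eq_left (by simpa using (by exact_mod_cast hj.le))
            have := hpair i j hi hj
            rw [add_comm] at this
            simpa [hε, hi.not_gt, hj, h1, h2] using this
          · have h2 : n j = 0 := max_eq_right (by simpa using not_lt.1 hj)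
            simp [hε, hj, h2]
      · by_cases hj : η j < 0
        · simpa [hε, hj] using PointedCone.smul_mem _ (hc j) (hlow j hj.le)
        · simp [hε, hj]
  · rintro (j | ⟨i, j⟩)
    · by_cases hj : η j ≤ 0
      · simp only [g', Sum.elim_inl, hj, if_true]
        exact ⟨intCastVec_mem_intHull g j, by
          rw [SetLike.mem_coe, mem_intHalfspace, hη']; exact_mod_cast hj⟩
      · simp only [g', Sum.elim_inl, hj, if_false, hzero]
        exact Submodule.zero_mem _
    · by_cases hij : 0 < η i ∧ η j < 0
      · simp only [g', Sum.elim_inr, hij, and_self, if_true]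
        rw [hcomb (i, j)]
        have hi : (0 : ℝ) < η i := by exact_mod_cast hij.1
        have hj : (η j : ℝ) < 0 := by exact_mod_cast hij.2
        refine ⟨Submodule.add_mem _
          (PointedCone.smul_mem _ hi.le (intCastVec_mem_intHull g j))
          (PointedCone.smul_mem _ (by linarith) (intCastVec_mem_intHull g i)), ?_⟩
        rw [SetLike.mem_coe, mem_intHalfspace]
        simp only [map_add, map_smul, hη', smul_eq_mul]
        linarith
      · simp only [g', Sum.elim_inr, hij, if_false, hzero]
        exact Submodule.zero_mem _

theorem IsIntCone.inf_finset_inf {ι σ : Type} {C : PointedCone ℝ (ι → ℝ)} (hC : IsIntCone C)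
    (D : σ → PointedCone ℝ (ι → ℝ)) (s : Finset σ)
    (hD : ∀ i ∈ s, ∀ C' : PointedCone ℝ (ι → ℝ), IsIntCone C' → IsIntCone (C' ⊓ D i)) :
    IsIntCone (C ⊓ s.inf D) := by
  classical
  induction s using Finset.induction_on with
  | empty => simpa using hC
  | insert a s _ ih =>
    rw [Finset.inf_insert, inf_comm (D a), ← inf_assoc]
    exact hD a (Finset.mem_insert_self a s) _
      (ih fun i hi => hD i (Finset.mem_insert_of_mem hi))

theorem IsIntCone.inf {ι : Type} [Fintype ι] {C D : PointedCone ℝ (ι → ℝ)}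
    (hC : IsIntCone C) (hD : IsIntCone D) : IsIntCone (C ⊓ D) := by
  classical
  obtain ⟨J, _, g, rfl⟩ := hC
  obtain ⟨K, _, h, rfl⟩ := hD
  let e : ι → J ⊕ K → ℤ := fun i => Sum.elim (fun j => g j i) (fun j => -h j i)
  have horth : ∀ c : J ⊕ K → ℝ,
      c ∈ intHull (fun j : J ⊕ K => (Pi.single j 1 : J ⊕ K → ℤ)) ↔ ∀ j, 0 ≤ c j := by
    have hs : ∀ c : J ⊕ K → ℝ,
        ∑ j, c j • intCastVec (Pi.single j 1 : J ⊕ K → ℤ) = c := by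
      intro c
      ext j
      simp [intCastVec, Finset.sum_apply, Pi.single_apply]
    intro c
    rw [mem_intHull]
    constructor
    · rintro ⟨d, hd, rfl⟩ j
      rw [hs]
      exact hd j
    · exact fun hc => ⟨c, hc, (hs c).symm⟩
  have hker := IsIntCone.inf_finset_inf
    (C := intHull (fun j : J ⊕ K => (Pi.single j 1 : J ⊕ K → ℤ))) ⟨_, inferInstance, _, rfl⟩
    (fun i => intHalfspace (e i) ⊓ intHalfspace (-e i)) Finset.univ (by
      intro i _ C' hC'
      rw [← inf_assoc]
      exact (hC'.inf_intHalfspace _).inf_intHalfspace _)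
  have hform : ∀ (i : ι) (c : J ⊕ K → ℝ), intForm (e i) c =
      ∑ j, c (Sum.inl j) * (g j i : ℝ) - ∑ j, c (Sum.inr j) * (h j i : ℝ) := by
    intro i c
    simp [intForm_apply, e, Fintype.sum_sum_type, Finset.sum_neg_distrib, mul_comm, sub_eq_add_neg]
  have hform' : ∀ (i : ι) (c : J ⊕ K → ℝ), intForm (-e i) c = -intForm (e i) c := by
    intro i c
    simp [intForm_apply]
  obtain ⟨M, _, m, hm⟩ := hker
  have hmem : ∀ c : J ⊕ K → ℝ, c ∈ intHull m ↔ (∀ j, 0 ≤ c j) ∧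
      ∀ i, ∑ j, c (Sum.inl j) * (g j i : ℝ) = ∑ j, c (Sum.inr j) * (h j i : ℝ) := by
    intro c
    rw [← hm, Submodule.mem_inf, horth, Submodule.mem_finsetInf]
    refine and_congr_right fun _ => forall_congr' fun i => ?_
    simp only [Finset.mem_univ, true_implies, Submodule.mem_inf, mem_intHalfspace, hform', hform]
    constructor
    · rintro ⟨h1, h2⟩; linarith
    · intro h1; constructor <;> linarith
  refine ⟨M, inferInstance, fun a i => ∑ j, m a (Sum.inl j) * g j i, le_antisymm ?_ ?_⟩
  · rintro x ⟨hx1, hx2⟩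
    obtain ⟨c, hc, hxc⟩ := mem_intHull.1 hx1
    obtain ⟨d, hd, hxd⟩ := mem_intHull.1 hx2
    have hcd : Sum.elim c d ∈ intHull m := by
      rw [hmem]
      refine ⟨by rintro (j | j); exacts [hc j, hd j], fun i => ?_⟩
      have := congrFun (hxc.symm.trans hxd) i
      simpa [intCastVec, Finset.sum_apply] using this
    obtain ⟨b, hb, hbm⟩ := mem_intHull.1 hcd
    refine mem_intHull.2 ⟨b, hb, ?_⟩
    have hcj : ∀ j, c j = ∑ a, b a * (m a (Sum.inl j) : ℝ) := by
      intro j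
      have := congrFun hbm (Sum.inl j)
      simpa [intCastVec, Finset.sum_apply] using this
    rw [hxc]
    ext i
    simp only [Finset.sum_apply, Pi.smul_apply, smul_eq_mul, intCastVec, hcj, Int.cast_sum,
      Int.cast_mul, Finset.sum_mul, Finset.mul_sum]
    rw [Finset.sum_comm]
    exact Finset.sum_congr rfl fun a _ => Finset.sum_congr rfl fun j _ => by ring
  · refine intHull_le.2 fun a => ?_
    obtain ⟨h1, h2⟩ := (hmem _).1 (intCastVec_mem_intHull m a)
    refine ⟨mem_intHull.2 ⟨fun j => m a (Sum.inl j), fun j => h1 (Sum.inl j), ?_⟩,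
      mem_intHull.2 ⟨fun j => m a (Sum.inr j), fun j => h1 (Sum.inr j), ?_⟩⟩
    · ext i
      simp [intCastVec, Finset.sum_apply]
    · ext i
      have := h2 i
      simpa [intCastVec, Finset.sum_apply] using this

/-- The cone generated by the two parts of `C` in the half-spaces `a ≤ 0` and `b ≤ 0`. -/
def splitCone {ι : Type} [Fintype ι] (C : PointedCone ℝ (ι → ℝ)) (a b : ι → ℤ) :
    PointedCone ℝ (ι → ℝ) :=
  (C ⊓ intHalfspace a) ⊔ (C ⊓ intHalfspace b)

theorem IsIntCone.splitCone {ι : Type} [Fintype ι] {C : PointedCone ℝ (ι → ℝ)}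
    (hC : IsIntCone C) (a b : ι → ℤ) : IsIntCone (splitCone C a b) :=
  (hC.inf_intHalfspace a).sup (hC.inf_intHalfspace b)

theorem splitCone_le {ι : Type} [Fintype ι] (C : PointedCone ℝ (ι → ℝ)) (a b : ι → ℤ) :
    splitCone C a b ≤ C :=
  sup_le inf_le_left inf_le_left

theorem splitCone_comm {ι : Type} [Fintype ι] (C : PointedCone ℝ (ι → ℝ)) (a b : ι → ℤ) :
    splitCone C a b = splitCone C b a :=
  sup_comm _ _

theorem intHull_inf_intHalfspace_le_splitCone {ι J : Type} [Fintype ι] [Fintype J]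
    {g : J → ι → ℤ} {a b a' b' : ι → ℤ} (hab : a + b = a' + b')
    (hnn : ∀ j, 0 ≤ (a' + b') ⬝ᵥ g j)
    (ha : ∀ j, (a' ⬝ᵥ g j).toNat ≤ (a ⬝ᵥ g j).toNat)
    (hb : ∀ j, (b' ⬝ᵥ g j).toNat ≤ (b ⬝ᵥ g j).toNat) :
    intHull g ⊓ intHalfspace a' ≤ splitCone (intHull g) a b := by
  classical
  have hcase : ∀ j, a ⬝ᵥ g j ≤ a' ⬝ᵥ g j ∨ (0 ≤ a' ⬝ᵥ g j ∧ b ⬝ᵥ g j ≤ 0) := by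
    intro j
    have h1 := ha j
    have h2 := hb j
    have h3 := hnn j
    have h4 : a ⬝ᵥ g j + b ⬝ᵥ g j = a' ⬝ᵥ g j + b' ⬝ᵥ g j := by
      rw [← add_dotProduct, hab, add_dotProduct]
    rw [add_dotProduct] at h3
    omega
  rintro x ⟨hx, hxa⟩
  obtain ⟨c, hc, rfl⟩ := mem_intHull.1 hx
  have hxa' : ∑ j, c j * ((a' ⬝ᵥ g j : ℤ) : ℝ) ≤ 0 := by
    have := mem_intHalfspace.1 hxa
    simpa [map_sum, intForm_intCastVec] using this
  rw [← Finset.sum_filter_add_sum_filter_not Finset.univ (fun j => a ⬝ᵥ g j ≤ a' ⬝ᵥ g j)]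
  refine Submodule.add_mem _ (Submodule.mem_sup_left ⟨?_, ?_⟩) (Submodule.mem_sup_right ?_)
  · exact Submodule.sum_mem _ fun j _ =>
      PointedCone.smul_mem _ (hc j) (intCastVec_mem_intHull g j)
  · rw [SetLike.mem_coe, mem_intHalfspace]
    simp only [map_sum, map_smul, intForm_intCastVec, smul_eq_mul]
    refine le_trans (Finset.sum_le_sum (g := fun j => c j * ((a' ⬝ᵥ g j : ℤ) : ℝ)) ?_) ?_
    · intro j hj
      exact mul_le_mul_of_nonneg_left (by exact_mod_cast (Finset.mem_filter.1 hj).2) (hc j)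
    · rw [← Finset.sum_filter_add_sum_filter_not Finset.univ
        (fun j => a ⬝ᵥ g j ≤ a' ⬝ᵥ g j)] at hxa'
      have : 0 ≤ ∑ j with ¬ a ⬝ᵥ g j ≤ a' ⬝ᵥ g j, c j * ((a' ⬝ᵥ g j : ℤ) : ℝ) := by
        refine Finset.sum_nonneg fun j hj => mul_nonneg (hc j) ?_
        exact_mod_cast ((hcase j).resolve_left (Finset.mem_filter.1 hj).2).1
      linarith
  · refine Submodule.sum_mem _ fun j hj => PointedCone.smul_mem _ (hc j)
      ⟨intCastVec_mem_intHull g j, ?_⟩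
    rw [SetLike.mem_coe, mem_intHalfspace, intForm_intCastVec]
    exact_mod_cast ((hcase j).resolve_left (Finset.mem_filter.1 hj).2).2

/-- In a well-quasi-order, every family is dominated from below by a finite subfamily. -/
theorem exists_finset_forall_exists_le {σ β : Type} [PartialOrder β] [WellQuasiOrderedLE β]
    (F : σ → β) : ∃ T : Finset σ, ∀ s, ∃ t ∈ T, F t ≤ F s := by
  classical
  have hfin : {x | Minimal (· ∈ range F) x}.Finite :=
    WellQuasiOrderedLE.finite_of_isAntichain (setOfPred_minimal_antichain _)
  have hpre : ∀ x ∈ {x | Minimal (· ∈ range F) x}, ∃ s, F s = x := fun x hx => hx.1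
  rcases isEmpty_or_nonempty σ with hσ | hσ
  · exact ⟨∅, fun s => hσ.elim s⟩
  choose! G hG using hpre
  refine ⟨hfin.toFinset.image G, fun s => ?_⟩
  obtain ⟨m, hms, hm⟩ := exists_minimal_le_of_wellFoundedLT (· ∈ range F) (F s) ⟨s, rfl⟩
  refine ⟨G m, Finset.mem_image_of_mem G (hfin.mem_toFinset.2 hm), ?_⟩
  rw [hG m hm]
  exact hms

/-- The split closure of a finitely generated integer cone, over an arbitrary family of splits of
constant width, is again a finitely generated integer cone. -/
theorem IsIntCone.iInf_splitCone {ι σ : Type} [Fintype ι] [Nonempty σ]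
    {C : PointedCone ℝ (ι → ℝ)} (hC : IsIntCone C) (a b : σ → ι → ℤ) (e : ι → ℤ)
    (hab : ∀ s, a s + b s = e) (he : ∀ z ∈ C, 0 ≤ intForm e z) :
    IsIntCone (⨅ s, _root_.splitCone C (a s) (b s)) := by
  classical
  obtain ⟨J, _, g, hg⟩ := id hC
  have heg : ∀ j, 0 ≤ e ⬝ᵥ g j := by
    intro j
    have := he _ (hg ▸ intCastVec_mem_intHull g j)
    rw [intForm_intCastVec] at this
    exact_mod_cast this
  obtain ⟨T, hT⟩ := exists_finset_forall_exists_le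
    (fun s => fun j => ((a s ⬝ᵥ g j).toNat, (b s ⬝ᵥ g j).toNat))
  have hle : ∀ s t, (∀ j, (a t ⬝ᵥ g j).toNat ≤ (a s ⬝ᵥ g j).toNat ∧
      (b t ⬝ᵥ g j).toNat ≤ (b s ⬝ᵥ g j).toNat) →
      _root_.splitCone C (a t) (b t) ≤ _root_.splitCone C (a s) (b s) := by
    intro s t hst
    rw [hg]
    refine sup_le ?_ ?_
    · exact intHull_inf_intHalfspace_le_splitCone (by rw [hab, hab])
        (by rw [hab]; exact heg) (fun j => (hst j).1) (fun j => (hst j).2)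
    · rw [splitCone_comm]
      exact intHull_inf_intHalfspace_le_splitCone
        (by rw [add_comm, hab, add_comm, hab])
        (by rw [add_comm, hab]; exact heg) (fun j => (hst j).2) (fun j => (hst j).1)
  have heq : ⨅ s, _root_.splitCone C (a s) (b s) =
      C ⊓ T.inf fun s => _root_.splitCone C (a s) (b s) := by
    refine le_antisymm (le_inf ?_ (Finset.le_inf fun s _ => iInf_le _ s)) (le_iInf fun s => ?_)
    · exact (iInf_le _ (Classical.arbitrary σ)).trans (splitCone_le _ _ _)
    · obtain ⟨t, ht, hts⟩ := hT s
      exact inf_le_right.trans ((Finset.inf_le ht).trans (hle s t fun j => hts j))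
  rw [heq]
  exact hC.inf_finset_inf _ _ fun s _ C' hC' => hC'.inf (hC.splitCone _ _)

/-- Coordinates of the homogenization of `Pt × (Fin k → ℝ)`. -/
abbrev HomIdx (k : ℕ) : Type := Option (Fin 2 ⊕ Fin k)

/-- The point at height one above `p`. -/
def homog {k : ℕ} (p : Pt × (Fin k → ℝ)) : HomIdx k → ℝ :=
  fun i => i.elim 1 (Sum.elim p.1 p.2)

/-- Forgetting the homogenizing coordinate. -/
def unhomog {k : ℕ} (z : HomIdx k → ℝ) : Pt × (Fin k → ℝ) :=
  (fun j => z (some (Sum.inl j)), fun i => z (some (Sum.inr i)))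

@[simp] theorem homog_none {k : ℕ} (p : Pt × (Fin k → ℝ)) : homog p none = 1 := rfl

@[simp] theorem homog_inl {k : ℕ} (p : Pt × (Fin k → ℝ)) (j : Fin 2) :
    homog p (some (Sum.inl j)) = p.1 j := rfl

@[simp] theorem homog_inr {k : ℕ} (p : Pt × (Fin k → ℝ)) (i : Fin k) :
    homog p (some (Sum.inr i)) = p.2 i := rfl

theorem homog_unhomog {k : ℕ} {z : HomIdx k → ℝ} (hz : z none = 1) : homog (unhomog z) = z := by
  ext (_ | (j | i))
  · exact hz.symm
  · rfl
  · rfl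

theorem unhomog_homog {k : ℕ} (p : Pt × (Fin k → ℝ)) : unhomog (homog p) = p := rfl

theorem unhomog_add {k : ℕ} (y z : HomIdx k → ℝ) : unhomog (y + z) = unhomog y + unhomog z := rfl

theorem unhomog_smul {k : ℕ} (c : ℝ) (z : HomIdx k → ℝ) :
    unhomog (c • z) = c • unhomog z := rfl

theorem homog_combo {k : ℕ} {p q : Pt × (Fin k → ℝ)} {s t : ℝ} (hst : s + t = 1) :
    homog (s • p + t • q) = s • homog p + t • homog q := by
  ext (_ | (j | i)) <;> simp [hst]

/-- The homogenized linear form of `π · x ≤ π₀`. -/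
def splitLow (k : ℕ) (π : Fin 2 → ℤ) (π₀ : ℤ) : HomIdx k → ℤ :=
  fun i => i.elim (-π₀) (Sum.elim π 0)

/-- The homogenized linear form of `π · x ≥ π₀ + 1`. -/
def splitHigh (k : ℕ) (π : Fin 2 → ℤ) (π₀ : ℤ) : HomIdx k → ℤ :=
  fun i => i.elim (π₀ + 1) (Sum.elim (-π) 0)

theorem splitLow_add_splitHigh (k : ℕ) (π : Fin 2 → ℤ) (π₀ : ℤ) :
    splitLow k π π₀ + splitHigh k π π₀ = Pi.single none 1 := by
  ext (_ | (j | i)) <;> simp [splitLow, splitHigh]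

theorem intForm_single_none {k : ℕ} (z : HomIdx k → ℝ) :
    intForm (Pi.single none 1) z = z none := by
  simp [intForm_apply, Fintype.sum_option]

theorem intForm_splitLow {k : ℕ} (π : Fin 2 → ℤ) (π₀ : ℤ) (z : HomIdx k → ℝ) :
    intForm (splitLow k π π₀) z = ∑ j, (π j : ℝ) * z (some (Sum.inl j)) - π₀ * z none := by
  simp [intForm_apply, Fintype.sum_option, Fintype.sum_sum_type, splitLow]
  ring

theorem intForm_splitHigh {k : ℕ} (π : Fin 2 → ℤ) (π₀ : ℤ) (z : HomIdx k → ℝ) :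
    intForm (splitHigh k π π₀) z =
      (π₀ + 1) * z none - ∑ j, (π j : ℝ) * z (some (Sum.inl j)) := by
  simp [intForm_apply, Fintype.sum_option, Fintype.sum_sum_type, splitHigh]
  ring

theorem mem_convexHull_of_homog_eq_add_direction {k : ℕ} {C : PointedCone ℝ (HomIdx k → ℝ)}
    {a b : HomIdx k → ℤ} (hab : ∀ z, intForm a z + intForm b z = z none)
    {u v : HomIdx k → ℝ} (hu : u ∈ C ⊓ intHalfspace a) (hv : v ∈ C ⊓ intHalfspace b)
    (hu1 : u none = 1) (hv0 : v none = 0) :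
    unhomog (u + v) ∈ convexHull ℝ ({q | homog q ∈ C ⊓ intHalfspace a} ∪
      {q | homog q ∈ C ⊓ intHalfspace b}) := by
  have huv : ∀ M : ℝ, homog (unhomog (u + M • v)) = u + M • v := fun M =>
    homog_unhomog (by simp [hu1, hv0])
  have hvb : intForm b v ≤ 0 := hv.2
  have hva := hab v
  rw [hv0] at hva
  rcases hvb.eq_or_lt with h0 | hneg
  · refine subset_convexHull ℝ _ (Or.inl ?_)
    have := huv 1
    rw [one_smul] at this
    rw [mem_ofPred_eq, this]
    refine Submodule.add_mem _ hu ⟨hv.1, ?_⟩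
    rw [SetLike.mem_coe, mem_intHalfspace]
    linarith
  · set M : ℝ := max 1 (intForm b u / -intForm b v) with hM
    have hM1 : 1 ≤ M := le_max_left _ _
    have hM0 : 0 < M := by linarith
    have hMu : intForm b u ≤ M * -intForm b v :=
      (div_le_iff₀ (by linarith)).1 (le_max_right _ _)
    have hq1 : unhomog u ∈ {q | homog q ∈ C ⊓ intHalfspace a} := by
      rwa [mem_ofPred_eq, homog_unhomog hu1]
    have hq2 : unhomog (u + M • v) ∈ {q | homog q ∈ C ⊓ intHalfspace b} := by
      rw [mem_ofPred_eq, huv]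
      refine ⟨Submodule.add_mem _ hu.1 (PointedCone.smul_mem _ hM0.le hv.1), ?_⟩
      rw [SetLike.mem_coe, mem_intHalfspace, map_add, map_smul, smul_eq_mul]
      linarith
    have hcomb : unhomog (u + v) = (1 - M⁻¹) • unhomog u + M⁻¹ • unhomog (u + M • v) := by
      rw [← unhomog_smul, ← unhomog_smul, ← unhomog_add]
      congr 1
      rw [smul_add, smul_smul, inv_mul_cancel₀ hM0.ne', one_smul, ← add_assoc, ← add_smul]
      simp
    rw [hcomb]
    exact convex_convexHull ℝ ({q : Pt × (Fin k → ℝ) | homog q ∈ C ⊓ intHalfspace a} ∪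
        {q | homog q ∈ C ⊓ intHalfspace b}) (subset_convexHull ℝ _ (Or.inl hq1))
      (subset_convexHull ℝ _ (Or.inr hq2)) (sub_nonneg.2 (inv_le_one_of_one_le₀ hM1))
      (inv_nonneg.2 hM0.le) (by ring)

theorem homog_mem_splitCone_iff {k : ℕ} {C : PointedCone ℝ (HomIdx k → ℝ)}
    (hC : ∀ z ∈ C, 0 ≤ z none) {a b : HomIdx k → ℤ}
    (hab : ∀ z, intForm a z + intForm b z = z none) (p : Pt × (Fin k → ℝ)) :
    homog p ∈ splitCone C a b ↔
      p ∈ convexHull ℝ ({q | homog q ∈ C ⊓ intHalfspace a} ∪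
        {q | homog q ∈ C ⊓ intHalfspace b}) := by
  constructor
  · intro hp
    obtain ⟨u, hu, v, hv, huv⟩ := Submodule.mem_sup.1 hp
    have hu0 : 0 ≤ u none := hC u hu.1
    have hv0 : 0 ≤ v none := hC v hv.1
    have hsum : u none + v none = 1 := by
      have := congrFun huv none
      simpa using this
    rw [← unhomog_homog p, ← huv]
    rcases hv0.eq_or_lt with h0 | hvpos
    · exact mem_convexHull_of_homog_eq_add_direction hab hu hv (by linarith) h0.symm
    rcases hu0.eq_or_lt with h0 | hupos
    · rw [add_comm u v, union_comm]
      exact mem_convexHull_of_homog_eq_add_direction (fun z => by rw [add_comm, hab]) hv hu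
        (by linarith) h0.symm
    have hnorm : ∀ (D : PointedCone ℝ (HomIdx k → ℝ)) (w : HomIdx k → ℝ), w ∈ D → 0 < w none →
        homog (unhomog ((w none)⁻¹ • w)) ∈ D := by
      intro D w hw hpos
      rw [homog_unhomog (by simp [hpos.ne'])]
      exact PointedCone.smul_mem _ (inv_nonneg.2 hpos.le) hw
    have hcomb : unhomog (u + v) = u none • unhomog ((u none)⁻¹ • u) +
        v none • unhomog ((v none)⁻¹ • v) := by
      rw [← unhomog_smul, ← unhomog_smul, smul_inv_smul₀ hupos.ne', smul_inv_smul₀ hvpos.ne',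
        unhomog_add]
    rw [hcomb]
    exact convex_convexHull ℝ ({q : Pt × (Fin k → ℝ) | homog q ∈ C ⊓ intHalfspace a} ∪
        {q | homog q ∈ C ⊓ intHalfspace b}) (subset_convexHull ℝ _ (Or.inl (hnorm _ u hu hupos)))
      (subset_convexHull ℝ _ (Or.inr (hnorm _ v hv hvpos))) hu0 hv0 hsum
  · intro hp
    have hconv : Convex ℝ {q : Pt × (Fin k → ℝ) | homog q ∈ splitCone C a b} := by
      intro x hx y hy s t hs ht hst
      rw [mem_ofPred_eq, homog_combo hst]
      exact Submodule.add_mem _ (PointedCone.smul_mem _ hs hx) (PointedCone.smul_mem _ ht hy)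
    refine convexHull_min ?_ hconv hp
    rintro q (hq | hq)
    · exact Submodule.mem_sup_left hq
    · exact Submodule.mem_sup_right hq

theorem exists_common_denominator {J : Type} [Fintype J] (q : J → ℝ)
    (hq : ∀ j, ∃ a : ℚ, q j = (a : ℝ)) :
    ∃ (d : ℕ) (z : J → ℤ), 0 < d ∧ ∀ j, (d : ℝ) * q j = z j := by
  classical
  choose a ha using hq
  refine ⟨∏ j, (a j).den, fun j => (∏ i ∈ Finset.univ.erase j, ((a i).den : ℤ)) * (a j).num,
    Finset.prod_pos fun j _ => (a j).den_pos, fun j => ?_⟩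
  have h1 : ((a j).den : ℝ) * (a j : ℝ) = (a j).num := by
    exact_mod_cast Rat.den_mul_eq_num (a j)
  rw [← Finset.prod_erase_mul _ _ (Finset.mem_univ j)]
  push_cast
  rw [ha j, mul_assoc, h1]

theorem exists_intCone_relaxP {k : ℕ} {r : Fin k → Pt} {f : Pt}
    (hr : ∀ i, IsRatPt (r i)) (hf : IsRatPt f) :
    ∃ C : PointedCone ℝ (HomIdx k → ℝ), IsIntCone C ∧
      (∀ z ∈ C, 0 ≤ z none ∧ ∀ i, 0 ≤ z (some (Sum.inr i))) ∧
      ∀ p, p ∈ relaxP k r f ↔ homog p ∈ C := by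
  classical
  obtain ⟨d, Z, hd, hZ⟩ := exists_common_denominator
    (fun p : Option (Fin k) × Fin 2 => p.1.elim (f p.2) (fun i => r i p.2)) (by
      rintro ⟨_ | i, j⟩
      · exact hf j
      · exact hr i j)
  have hdR : (0 : ℝ) < d := by exact_mod_cast hd
  have hZf : ∀ j, (d : ℝ) * f j = Z (none, j) := fun j => hZ (none, j)
  have hZr : ∀ i j, (d : ℝ) * r i j = Z (some i, j) := fun i j => hZ (some i, j)
  let g : Option (Fin k) → HomIdx k → ℤ := fun a => a.elim
    (fun t => t.elim (d : ℤ) (Sum.elim (fun j => Z (none, j)) 0))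
    (fun i t => t.elim 0 (Sum.elim (fun j => Z (some i, j)) (Pi.single i (d : ℤ))))
  have hnone : ∀ c : Option (Fin k) → ℝ, (∑ a, c a • intCastVec (g a)) none = c none * d := by
    intro c
    simp [Fintype.sum_option, intCastVec, g, Finset.sum_apply]
  have hinl : ∀ (c : Option (Fin k) → ℝ) (j : Fin 2),
      (∑ a, c a • intCastVec (g a)) (some (Sum.inl j)) =
        c none * d * f j + ∑ i, c (some i) * d * r i j := by
    intro c j
    simp [Fintype.sum_option, intCastVec, g, Finset.sum_apply, mul_assoc, hZf, hZr]
  have hinr : ∀ (c : Option (Fin k) → ℝ) (i : Fin k),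
      (∑ a, c a • intCastVec (g a)) (some (Sum.inr i)) = c (some i) * d := by
    intro c i
    simp [Fintype.sum_option, intCastVec, g, Finset.sum_apply, Pi.single_apply]
  refine ⟨intHull g, ⟨_, inferInstance, g, rfl⟩, ?_, fun p => ⟨?_, ?_⟩⟩
  · intro z hz
    obtain ⟨c, hc, rfl⟩ := mem_intHull.1 hz
    refine ⟨?_, fun i => ?_⟩
    · rw [hnone]
      exact mul_nonneg (hc _) hdR.le
    · rw [hinr]
      exact mul_nonneg (hc _) hdR.le
  · rintro ⟨hs, hx⟩
    refine mem_intHull.2 ⟨fun a => a.elim (d : ℝ)⁻¹ (fun i => p.2 i / d), ?_, ?_⟩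
    · rintro (_ | i)
      · exact inv_nonneg.2 hdR.le
      · exact div_nonneg (hs i) hdR.le
    · ext (_ | (j | i))
      · rw [hnone]
        simp [hdR.ne']
      · rw [hinl]
        simp [hdR.ne', hx, Finset.sum_apply]
      · rw [hinr]
        simp [hdR.ne']
  · intro hp
    obtain ⟨c, hc, hpc⟩ := mem_intHull.1 hp
    have h0 : c none * d = 1 := by
      rw [← hnone c, ← hpc, homog_none]
    have hs : ∀ i, p.2 i = c (some i) * d := by
      intro i
      rw [← hinr c, ← hpc, homog_inr]
    refine ⟨fun i => ?_, ?_⟩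
    · rw [hs]
      exact mul_nonneg (hc _) hdR.le
    · ext j
      have := congrFun hpc (some (Sum.inl j))
      rw [hinl, homog_inl, h0] at this
      simp [this, hs, Finset.sum_apply]

/-- The split closures of the rational relaxation are rational polyhedra. -/
theorem exists_intCone_closures {k : ℕ} {r : Fin k → Pt} {f : Pt}
    (hr : ∀ i, IsRatPt (r i)) (hf : IsRatPt f) (n : ℕ) :
    ∃ C : PointedCone ℝ (HomIdx k → ℝ), IsIntCone C ∧
      (∀ z ∈ C, 0 ≤ z none ∧ ∀ i, 0 ≤ z (some (Sum.inr i))) ∧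
      ∀ p, p ∈ closures k r f n ↔ homog p ∈ C := by
  induction n with
  | zero => exact exists_intCone_relaxP hr hf
  | succ n ih =>
    obtain ⟨C, hC, hnn, hmem⟩ := ih
    have hab : ∀ (π : Fin 2 → ℤ) (π₀ : ℤ) (z : HomIdx k → ℝ),
        intForm (splitLow k π π₀) z + intForm (splitHigh k π π₀) z = z none := by
      intro π π₀ z
      rw [intForm_splitLow, intForm_splitHigh]
      ring
    refine ⟨⨅ s : (Fin 2 → ℤ) × ℤ, splitCone C (splitLow k s.1 s.2) (splitHigh k s.1 s.2),
      hC.iInf_splitCone _ _ (Pi.single none 1) (fun s => splitLow_add_splitHigh k s.1 s.2)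
        (fun z hz => by rw [intForm_single_none]; exact (hnn z hz).1),
      fun z hz => hnn z (splitCone_le _ _ _ ((Submodule.mem_iInf _).1 hz (0, 0))), fun p => ?_⟩
    have hlow : ∀ (π : Fin 2 → ℤ) (π₀ : ℤ),
        closures k r f n ∩ {p | ∑ j, (π j : ℝ) * p.1 j ≤ (π₀ : ℝ)} =
          {q | homog q ∈ C ⊓ intHalfspace (splitLow k π π₀)} := by
      intro π π₀
      ext q
      simp [Submodule.mem_inf, mem_intHalfspace, intForm_splitLow, hmem]
    have hhigh : ∀ (π : Fin 2 → ℤ) (π₀ : ℤ),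
        closures k r f n ∩ {p | (π₀ : ℝ) + 1 ≤ ∑ j, (π j : ℝ) * p.1 j} =
          {q | homog q ∈ C ⊓ intHalfspace (splitHigh k π π₀)} := by
      intro π π₀
      ext q
      simp [Submodule.mem_inf, mem_intHalfspace, intForm_splitHigh, hmem]
    rw [Submodule.mem_iInf, Prod.forall]
    simp only [closures, splitClosure, mem_iInter]
    refine forall_congr' fun π => forall_congr' fun π₀ => ?_
    rw [homog_mem_splitCone_iff (fun z hz => (hnn z hz).1) (hab π π₀), hlow, hhigh]

/-- The face `s_{k+1} = 0` of a split closure projects into the split closure of the problem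
without the last ray. -/
theorem last_nonneg_and_init_mem_closures {k : ℕ} (r : Fin k → Pt) (f rnew : Pt) (n : ℕ) :
    ∀ p ∈ closures (k + 1) (Fin.snoc r rnew) f n, 0 ≤ p.2 (Fin.last k) ∧
      (p.2 (Fin.last k) = 0 → (p.1, fun i : Fin k => p.2 i.castSucc) ∈ closures k r f n) := by
  induction n with
  | zero =>
    rintro p ⟨hs, hx⟩
    refine ⟨hs _, fun h0 => ⟨fun i => hs _, ?_⟩⟩
    simpa [Fin.sum_univ_castSucc, h0] using hx
  | succ n ih =>
    have hface : ∀ K : Set (Pt × (Fin k → ℝ)), Convex ℝ K →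
        Convex ℝ {p : Pt × (Fin (k + 1) → ℝ) | 0 ≤ p.2 (Fin.last k) ∧
          (p.2 (Fin.last k) = 0 → (p.1, fun i : Fin k => p.2 i.castSucc) ∈ K)} := by
      rintro K hK x ⟨hx0, hx⟩ y ⟨hy0, hy⟩ s t hs ht hst
      have hlast : (s • x + t • y).2 (Fin.last k) =
        s * x.2 (Fin.last k) + t * y.2 (Fin.last k) := rfl
      have h1 : 0 ≤ s * x.2 (Fin.last k) := mul_nonneg hs hx0
      have h2 : 0 ≤ t * y.2 (Fin.last k) := mul_nonneg ht hy0
      refine ⟨by rw [hlast]; linarith, fun h0 => ?_⟩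
      rw [hlast] at h0
      rcases hs.eq_or_lt with rfl | hs'
      · obtain rfl : t = 1 := by linarith
        have := hy (by linarith)
        simpa using this
      rcases ht.eq_or_lt with rfl | ht'
      · obtain rfl : s = 1 := by linarith
        have := hx (by linarith)
        simpa using this
      have hx' := hx ((mul_eq_zero.1 (by linarith : s * x.2 (Fin.last k) = 0)).resolve_left hs'.ne')
      have hy' := hy ((mul_eq_zero.1 (by linarith : t * y.2 (Fin.last k) = 0)).resolve_left ht'.ne')
      exact hK hx' hy' hs ht hst
    intro p hp
    have hstep : ∀ (π : Fin 2 → ℤ) (π₀ : ℤ), 0 ≤ p.2 (Fin.last k) ∧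
        (p.2 (Fin.last k) = 0 → (p.1, fun i : Fin k => p.2 i.castSucc) ∈
          convexHull ℝ ((closures k r f n ∩ {p | ∑ j, (π j : ℝ) * p.1 j ≤ (π₀ : ℝ)}) ∪
            (closures k r f n ∩ {p | (π₀ : ℝ) + 1 ≤ ∑ j, (π j : ℝ) * p.1 j}))) := by
      intro π π₀
      have hpπ := mem_iInter.1 (mem_iInter.1 hp π) π₀
      refine convexHull_min ?_ (hface _ (convex_convexHull ℝ _)) hpπ
      rintro q (⟨hq, hqπ⟩ | ⟨hq, hqπ⟩)
      · exact ⟨(ih q hq).1, fun h0 => subset_convexHull ℝ _ (Or.inl ⟨(ih q hq).2 h0, hqπ⟩)⟩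
      · exact ⟨(ih q hq).1, fun h0 => subset_convexHull ℝ _ (Or.inr ⟨(ih q hq).2 h0, hqπ⟩)⟩
    exact ⟨(hstep 0 0).1, fun h0 => mem_iInter.2 fun π => mem_iInter.2 fun π₀ =>
      (hstep π π₀).2 h0⟩

/-- An inequality valid on the face `s_{k+1} = 0` of a rational polyhedron lifts to an inequality
valid on the polyhedron. -/
theorem IsIntCone.exists_lifting {k : ℕ} {C : PointedCone ℝ (HomIdx (k + 1) → ℝ)}
    (hC : IsIntCone C) (hnn : ∀ z ∈ C, 0 ≤ z none ∧ ∀ i, 0 ≤ z (some (Sum.inr i)))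
    {α : Fin k → ℝ} (hα : ∀ i, 0 ≤ α i) {γ : ℝ}
    (hface : ∀ p : Pt × (Fin (k + 1) → ℝ), homog p ∈ C → p.2 (Fin.last k) = 0 →
      γ ≤ ∑ i, α i * p.2 i.castSucc) :
    ∃ a₀ : ℝ, 0 ≤ a₀ ∧ ∀ a, a₀ ≤ a → ∀ p : Pt × (Fin (k + 1) → ℝ), homog p ∈ C →
      γ ≤ ∑ i, (Fin.snoc α a : Fin (k + 1) → ℝ) i * p.2 i := by
  obtain ⟨J, _, g, hg⟩ := hC
  have hgC : ∀ j, intCastVec (g j) ∈ C := fun j => hg ▸ intCastVec_mem_intHull g j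
  refine ⟨∑ j, |γ * (g j none : ℝ)|, Finset.sum_nonneg fun j _ => abs_nonneg _, ?_⟩
  intro a ha p hp
  have hgen : ∀ j, γ * (g j none : ℝ) ≤
      (∑ i : Fin k, α i * (g j (some (Sum.inr i.castSucc)) : ℝ)) +
        a * (g j (some (Sum.inr (Fin.last k))) : ℝ) := by
    intro j
    obtain ⟨h0, hs⟩ := hnn _ (hgC j)
    have hsum : 0 ≤ ∑ i : Fin k, α i * (g j (some (Sum.inr i.castSucc)) : ℝ) :=
      Finset.sum_nonneg fun i _ => mul_nonneg (hα i) (hs i.castSucc)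
    have hja : |γ * (g j none : ℝ)| ≤ a :=
      (Finset.single_le_sum (f := fun j => |γ * (g j none : ℝ)|)
        (fun j _ => abs_nonneg _) (Finset.mem_univ j)).trans ha
    have ha0 : 0 ≤ a := (abs_nonneg _).trans hja
    have hlast : (0 : ℝ) ≤ g j (some (Sum.inr (Fin.last k))) := hs (Fin.last k)
    rcases hlast.eq_or_lt with ht | ht
    · rw [← ht, mul_zero, add_zero]
      have h0' : (0 : ℝ) ≤ g j none := h0
      rcases h0'.eq_or_lt with hz | hz
      · rw [← hz, mul_zero]
        exact hsum
      · have hq : homog (unhomog ((g j none : ℝ)⁻¹ • intCastVec (g j))) ∈ C := by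
          rw [homog_unhomog (by simp [intCastVec, hz.ne'])]
          exact PointedCone.smul_mem _ (inv_nonneg.2 hz.le) (hgC j)
        have hγ := hface _ hq (by simp [unhomog, intCastVec, ← ht])
        have heq : ∑ i : Fin k, α i * (unhomog ((g j none : ℝ)⁻¹ • intCastVec (g j))).2 i.castSucc =
            (∑ i : Fin k, α i * (g j (some (Sum.inr i.castSucc)) : ℝ)) / (g j none : ℝ) := by
          rw [Finset.sum_div]
          refine Finset.sum_congr rfl fun i _ => ?_
          simp only [unhomog, intCastVec, Pi.smul_apply, smul_eq_mul]
          ring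
        rw [heq] at hγ
        exact (le_div_iff₀ hz).1 hγ
    · have h1 : (1 : ℝ) ≤ g j (some (Sum.inr (Fin.last k))) := by
        have : 0 < g j (some (Sum.inr (Fin.last k))) := by exact_mod_cast ht
        exact_mod_cast this
      have h2 := le_mul_of_one_le_right ha0 h1
      have h3 := le_abs_self (γ * (g j none : ℝ))
      linarith
  obtain ⟨c, hc, hpc⟩ := mem_intHull.1 (hg ▸ hp)
  have h1 : 1 = ∑ j, c j * (g j none : ℝ) := by
    have := congrFun hpc none
    simpa [intCastVec, Finset.sum_apply] using this
  have hs : ∀ i, p.2 i = ∑ j, c j * (g j (some (Sum.inr i)) : ℝ) := by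
    intro i
    have := congrFun hpc (some (Sum.inr i))
    simpa [intCastVec, Finset.sum_apply] using this
  have hrhs : ∑ i, (Fin.snoc α a : Fin (k + 1) → ℝ) i * p.2 i =
      ∑ j, c j * ((∑ i : Fin k, α i * (g j (some (Sum.inr i.castSucc)) : ℝ)) +
        a * (g j (some (Sum.inr (Fin.last k))) : ℝ)) := by
    simp only [Fin.sum_univ_castSucc, Fin.snoc_castSucc, Fin.snoc_last, hs, mul_add,
      Finset.sum_add_distrib, Finset.mul_sum]
    congr 1
    · rw [Finset.sum_comm]
      exact Finset.sum_congr rfl fun j _ => Finset.sum_congr rfl fun i _ => by ring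
    · exact Finset.sum_congr rfl fun j _ => by ring
  rw [hrhs]
  calc γ = γ * ∑ j, c j * (g j none : ℝ) := by rw [← h1, mul_one]
    _ = ∑ j, c j * (γ * (g j none : ℝ)) := by
        rw [Finset.mul_sum]
        exact Finset.sum_congr rfl fun j _ => by ring
    _ ≤ _ := Finset.sum_le_sum fun j _ => mul_le_mul_of_nonneg_left (hgen j) (hc j)

/-- Every point of the mixed-integer set dominates one whose integer part is bounded. -/
theorem exists_bound_mixedP {k : ℕ} {r : Fin k → Pt} (hr : ∀ i, IsRatPt (r i)) (f : Pt) :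
    ∃ B : ℤ, ∀ p ∈ mixedP k r f, ∃ (z : Fin 2 → ℤ) (q : Pt × (Fin k → ℝ)),
      (∀ j, |z j| ≤ B) ∧ q ∈ relaxP k r f ∧ q.1 = (fun j => (z j : ℝ)) ∧ ∀ i, q.2 i ≤ p.2 i := by
  obtain ⟨d, Z, hd, hZ⟩ := exists_common_denominator
    (fun p : Fin k × Fin 2 => r p.1 p.2) (fun p => hr p.1 p.2)
  have hdR : (0 : ℝ) < d := by exact_mod_cast hd
  have hZr : ∀ i j, (d : ℝ) * r i j = Z (i, j) := fun i j => hZ (i, j)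
  refine ⟨⌈∑ j, (|f j| + ∑ i, d * |r i j|)⌉, ?_⟩
  rintro p ⟨hint, hs, hx⟩
  choose x hxz using hint
  set m : Fin k → ℤ := fun i => ⌊p.2 i / d⌋ with hm
  set s : Fin k → ℝ := fun i => p.2 i - d * m i with hsdef
  have hm0 : ∀ i, (0 : ℝ) ≤ m i := by
    intro i
    exact_mod_cast Int.floor_nonneg.2 (div_nonneg (hs i) hdR.le)
  have hs0 : ∀ i, 0 ≤ s i := by
    intro i
    have := (le_div_iff₀ hdR).1 (Int.floor_le (p.2 i / d))
    simp only [hsdef, hm]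
    linarith
  have hsd : ∀ i, s i ≤ d := by
    intro i
    have := (div_lt_iff₀ hdR).1 (Int.lt_floor_add_one (p.2 i / d))
    simp only [hsdef, hm]
    linarith
  have hzq : ∀ j, ((x j - ∑ i, m i * Z (i, j) : ℤ) : ℝ) = f j + ∑ i, s i * r i j := by
    intro j
    push_cast
    rw [← hxz j, hx]
    simp only [Pi.add_apply, Finset.sum_apply, Pi.smul_apply, smul_eq_mul, ← hZr, hsdef, sub_mul,
      Finset.sum_sub_distrib]
    rw [add_sub_assoc]
    congr 2
    exact Finset.sum_congr rfl fun i _ => by ring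
  refine ⟨fun j => x j - ∑ i, m i * Z (i, j), (f + ∑ i, s i • r i, s), fun j => ?_,
    ⟨hs0, rfl⟩, ?_, fun i => ?_⟩
  · have hj : |((x j - ∑ i, m i * Z (i, j) : ℤ) : ℝ)| ≤ |f j| + ∑ i, d * |r i j| := by
      rw [hzq]
      refine (abs_add_le _ _).trans (add_le_add le_rfl ?_)
      refine (Finset.abs_sum_le_sum_abs _ _).trans (Finset.sum_le_sum fun i _ => ?_)
      rw [abs_mul, abs_of_nonneg (hs0 i)]
      exact mul_le_mul_of_nonneg_right (hsd i) (abs_nonneg _)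
    have hle := hj.trans (Finset.single_le_sum (f := fun j => |f j| + ∑ i, d * |r i j|)
      (fun j _ => add_nonneg (abs_nonneg _)
        (Finset.sum_nonneg fun i _ => mul_nonneg hdR.le (abs_nonneg _))) (Finset.mem_univ j))
    exact_mod_cast hle.trans (Int.le_ceil _)
  · ext j
    rw [hzq]
    simp [Finset.sum_apply]
  · have := mul_nonneg hdR.le (hm0 i)
    simp only [hsdef]
    linarith

theorem exists_lifting_validIneq {k : ℕ} {r : Fin k → Pt} {f rnew : Pt}
    (hr : ∀ i, IsRatPt (r i)) (hf : IsRatPt f) (hrnew : IsRatPt rnew)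
    {α : Fin k → ℝ} (hα : ∀ i, 0 ≤ α i) {γ : ℝ} (hvalid : ValidIneq k r f α γ) :
    ∃ a₀ : ℝ, 0 ≤ a₀ ∧ ∀ a, a₀ ≤ a →
      ValidIneq (k + 1) (Fin.snoc r rnew) f (Fin.snoc α a) γ := by
  have hr' : ∀ i, IsRatPt ((Fin.snoc r rnew : Fin (k + 1) → Pt) i) := by
    intro i
    refine Fin.lastCases ?_ (fun i => ?_) i
    · simpa using hrnew
    · simpa using hr i
  obtain ⟨C, hC, hnn, hmem⟩ := exists_intCone_relaxP hr' hf
  obtain ⟨B, hB⟩ := exists_bound_mixedP hr' f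
  have hfix : ∀ z : Fin 2 → ℤ, ∃ a₀ : ℝ, 0 ≤ a₀ ∧ ∀ a, a₀ ≤ a →
      ∀ q ∈ relaxP (k + 1) (Fin.snoc r rnew) f, q.1 = (fun j => (z j : ℝ)) →
        γ ≤ ∑ i, (Fin.snoc α a : Fin (k + 1) → ℝ) i * q.2 i := by
    intro z
    let e : Fin 2 → HomIdx (k + 1) → ℤ := fun j => splitLow (k + 1) (Pi.single j 1) (z j)
    have he : ∀ j y, intForm (e j) y = y (some (Sum.inl j)) - z j * y none := by
      intro j y
      simp [e, intForm_splitLow, Pi.single_apply]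
    have he' : ∀ j y, intForm (-e j) y = -intForm (e j) y := by
      intro j y
      simp [intForm_apply]
    have hD := hC.inf_finset_inf (fun j => intHalfspace (e j) ⊓ intHalfspace (-e j))
      Finset.univ (by
        intro j _ C' hC'
        rw [← inf_assoc]
        exact (hC'.inf_intHalfspace _).inf_intHalfspace _)
    have hDmem : ∀ q : Pt × (Fin (k + 1) → ℝ),
        homog q ∈ C ⊓ Finset.univ.inf (fun j => intHalfspace (e j) ⊓ intHalfspace (-e j)) ↔
          q ∈ relaxP (k + 1) (Fin.snoc r rnew) f ∧ q.1 = (fun j => (z j : ℝ)) := by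
      intro q
      rw [Submodule.mem_inf, ← hmem, Submodule.mem_finsetInf, funext_iff]
      refine and_congr_right fun _ => forall_congr' fun j => ?_
      simp only [Finset.mem_univ, true_implies, Submodule.mem_inf, mem_intHalfspace, he', he,
        homog_inl, homog_none]
      constructor
      · rintro ⟨h1, h2⟩; linarith
      · intro h1; constructor <;> linarith
    obtain ⟨a₀, ha₀, h⟩ := hD.exists_lifting (fun y hy => hnn y hy.1) hα (γ := γ) (by
      intro q hq h0
      obtain ⟨hq1, hq2⟩ := (hDmem q).1 hq
      refine hvalid (q.1, fun i => q.2 i.castSucc) ⟨fun j => ⟨z j, congrFun hq2 j⟩, ?_⟩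
      exact (last_nonneg_and_init_mem_closures r f rnew 0 q hq1).2 h0)
    exact ⟨a₀, ha₀, fun a ha q hq1 hq2 => h a ha q ((hDmem q).2 ⟨hq1, hq2⟩)⟩
  choose A hA0 hA using hfix
  refine ⟨∑ z ∈ Finset.Icc (fun _ : Fin 2 => -B) (fun _ => B), A z,
    Finset.sum_nonneg fun z _ => hA0 z, fun a ha p hp => ?_⟩
  obtain ⟨z, q, hz, hq, hqz, hqp⟩ := hB p hp
  have hza : A z ≤ a := by
    refine (Finset.single_le_sum (fun z _ => hA0 z)
      (Finset.mem_Icc.2 ⟨fun j => ?_, fun j => ?_⟩)).trans ha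
    · exact (abs_le.1 (hz j)).1
    · exact (abs_le.1 (hz j)).2
  refine (hA z a hza q hq hqz).trans (Finset.sum_le_sum fun i _ => ?_)
  refine mul_le_mul_of_nonneg_left (hqp i) ?_
  refine Fin.lastCases ?_ (fun i => ?_) i
  · simpa using (hA0 z).trans hza
  · simpa using hα i

theorem exists_lifting_closures {k : ℕ} {r : Fin k → Pt} {f rnew : Pt}
    (hr : ∀ i, IsRatPt (r i)) (hf : IsRatPt f) (hrnew : IsRatPt rnew)
    {α : Fin k → ℝ} (hα : ∀ i, 0 ≤ α i) {γ : ℝ} (n : ℕ)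
    (hvalid : ∀ p ∈ closures k r f n, γ ≤ ∑ i, α i * p.2 i) :
    ∃ a₀ : ℝ, 0 ≤ a₀ ∧ ∀ a, a₀ ≤ a → ∀ p ∈ closures (k + 1) (Fin.snoc r rnew) f n,
      γ ≤ ∑ i, (Fin.snoc α a : Fin (k + 1) → ℝ) i * p.2 i := by
  have hr' : ∀ i, IsRatPt ((Fin.snoc r rnew : Fin (k + 1) → Pt) i) := by
    intro i
    refine Fin.lastCases ?_ (fun i => ?_) i
    · simpa using hrnew
    · simpa using hr i
  obtain ⟨C, hC, hnn, hmem⟩ := exists_intCone_closures hr' hf n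
  obtain ⟨a₀, ha₀, h⟩ := hC.exists_lifting hnn hα (γ := γ) fun q hq h0 =>
    hvalid _ ((last_nonneg_and_init_mem_closures r f rnew n q ((hmem q).2 hq)).2 h0)
  exact ⟨a₀, ha₀, fun a ha p hp => h a ha p ((hmem p).1 hp)⟩

theorem general_lifting (k : ℕ)
    (hk : 1 ≤ k)
    (r : Fin k → Pt) (f : Pt)
    (hr_rat : ∀ i, IsRatPt (r i)) (hr_ne : ∀ i, r i ≠ 0)
    (hf_rat : IsRatPt f) (hf_int : ¬ IsIntPt f)
    (hne : (mixedP k r f).Nonempty)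
    (rnew : Pt) (hrnew_rat : IsRatPt rnew) (hrnew_ne : rnew ≠ 0)
    (α : Fin k → ℝ) (hα : ∀ i, 0 ≤ α i) (γ : ℝ)
    (hvalid : ValidIneq k r f α γ)
    (η : ℕ∞) (hη : splitRank k r f α γ = η) :
    ∃ anew : ℝ, 0 ≤ anew ∧
      ValidIneq (k + 1) (Fin.snoc r rnew) f (Fin.snoc α anew) γ ∧
      splitRank (k + 1) (Fin.snoc r rnew) f (Fin.snoc α anew) γ ≤ η := by
  obtain ⟨a₁, ha₁, hval⟩ := exists_lifting_validIneq hr_rat hf_rat hrnew_rat hα hvalid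
  rcases eq_or_ne η ⊤ with rfl | hfin
  · exact ⟨a₁, ha₁, hval a₁ le_rfl, le_top⟩
  have hne' : {j : ℕ∞ | ∃ n : ℕ, j = (n : ℕ∞) ∧
      ∀ p ∈ closures k r f n, γ ≤ ∑ i, α i * p.2 i}.Nonempty := by
    by_contra h
    rw [not_nonempty_iff_eq_empty] at h
    exact hfin (by rw [← hη, splitRank, h, sInf_empty])
  obtain ⟨n, hn, hclos⟩ := csInf_mem hne'
  obtain ⟨a₂, _, hlift⟩ := exists_lifting_closures hr_rat hf_rat hrnew_rat hα n hclos
  refine ⟨max a₁ a₂, ha₁.trans (le_max_left _ _), hval _ (le_max_left _ _), ?_⟩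
  rw [← hη, splitRank, splitRank, hn]
  exact sInf_le ⟨n, rfl, hlift _ (le_max_right _ _)⟩
end

section
/- Let k = 2, so R = [r¹ r²] ∈ ℚ^{2×2} with nonzero columns, and let α₁ s₁ + α₂ s₂ ≥ 1 with α₁, α₂ ≥ 0 be a facet-defining inequality for conv(P([r¹ r²],f)). Then the split rank of α₁ s₁ + α₂ s₂ ≥ 1 with respect to P([r¹ r²],f)⁰ is at most two. -/
open Set Pointwise

/-- A convex planar set containing two consecutive points of a lattice line, and no lattice point
on the next lattice line below it, has a split both of whose sides only meet the set strictly
above that next line. -/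
theorem exists_split_of_adjacent {K : Set Pt} (hK : Convex ℝ K) {z d : Fin 2 → ℤ}
    (hd : IsCoprime (d 0) (d 1)) (hz : (fun j => (z j : ℝ)) ∈ K)
    (hzd : (fun j => ((z j + d j : ℤ) : ℝ)) ∈ K)
    (hno : ∀ m : Fin 2 → ℤ, (fun j => (m j : ℝ)) ∈ K →
      d 0 * (m 1 - z 1) - d 1 * (m 0 - z 0) ≠ -1) :
    ∃ (π : Fin 2 → ℤ) (π₀ : ℤ), ∀ x ∈ K,
      (∑ j, (π j : ℝ) * x j ≤ π₀ ∨ (π₀ : ℝ) + 1 ≤ ∑ j, (π j : ℝ) * x j) →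
      -1 < (d 0 : ℝ) * (x 1 - z 1) - d 1 * (x 0 - z 0) := by
  obtain ⟨u0, u1, hu⟩ := hd
  have huR : (u0 : ℝ) * d 0 + u1 * d 1 = 1 := by exact_mod_cast hu
  set ξ : Pt → ℝ := fun x => u0 * (x 0 - z 0) + u1 * (x 1 - z 1) with hξ
  set y : Pt → ℝ := fun x => (d 0 : ℝ) * (x 1 - z 1) - d 1 * (x 0 - z 0) with hy
  have hnint : ∀ n : ℤ, ∀ x ∈ K, y x = -1 → ξ x ≠ n := by
    intro n x hx hyx hξx
    have h0 : x 0 = (z 0 + n * d 0 + u1 : ℤ) := by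
      simp only [hξ, hy] at hyx hξx
      push_cast
      linear_combination (d 0 : ℝ) * hξx - u1 * hyx - (x 0 - z 0) * huR
    have h1 : x 1 = (z 1 + n * d 1 - u0 : ℤ) := by
      simp only [hξ, hy] at hyx hξx
      push_cast
      linear_combination (d 1 : ℝ) * hξx + u0 * hyx - (x 1 - z 1) * huR
    have hxm : x = fun j => ((![z 0 + n * d 0 + u1, z 1 + n * d 1 - u0] j : ℤ) : ℝ) := by
      funext j; fin_cases j
      · simpa using h0
      · simpa using h1
    refine hno _ (hxm ▸ hx) ?_
    simp only [Matrix.cons_val_zero, Matrix.cons_val_one]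
    linear_combination -hu
  have hslice : Convex ℝ {x | y x = -1} := by
    intro x hx w hw a b _ _ hab
    simp only [hy, mem_ofPred_eq, Pi.add_apply, Pi.smul_apply, smul_eq_mul] at *
    linear_combination a * hx + b * hw + (d 0 * z 1 - d 1 * z 0 - 1) * hab
  have hcont : Continuous ξ := by fun_prop
  have hJ := ((hK.inter hslice).isPreconnected.image ξ hcont.continuousOn).ordConnected
  have hstrip : ∃ a : ℤ, ∀ x ∈ K, y x = -1 → (a : ℝ) < ξ x ∧ ξ x < a + 1 := by
    by_cases hex : ∃ k ∈ K, y k = -1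
    · obtain ⟨k, hk, hyk⟩ := hex
      have hkJ : ξ k ∈ ξ '' (K ∩ {x | y x = -1}) := ⟨k, ⟨hk, hyk⟩, rfl⟩
      refine ⟨⌊ξ k⌋, fun x hx hyx => ?_⟩
      have hxJ : ξ x ∈ ξ '' (K ∩ {x | y x = -1}) := ⟨x, ⟨hx, hyx⟩, rfl⟩
      constructor <;> by_contra! hc
      · obtain ⟨w, ⟨hw, hyw⟩, hξw⟩ := hJ.out hxJ hkJ ⟨hc, Int.floor_le _⟩
        exact hnint _ w hw hyw hξw
      · obtain ⟨w, ⟨hw, hyw⟩, hξw⟩ := hJ.out hkJ hxJ ⟨(Int.lt_floor_add_one _).le, hc⟩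
        exact hnint (⌊ξ k⌋ + 1) w hw hyw (by rw [hξw]; push_cast; rfl)
    · push Not at hex
      exact ⟨0, fun x hx hyx => absurd hyx (hex x hx)⟩
  obtain ⟨a, ha⟩ := hstrip
  refine ⟨![u0 - a * d 1, u1 + a * d 0],
    (u0 - a * d 1) * z 0 + (u1 + a * d 0) * z 1, fun x hx hsplit => ?_⟩
  change -1 < y x
  by_contra! hyx
  have hpos : 0 < -y x := by linarith
  have hle : 0 ≤ 1 + (y x)⁻¹ := by
    have : (-y x)⁻¹ ≤ 1 := inv_le_one_of_one_le₀ (by linarith)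
    rw [inv_neg] at this; linarith
  have hinv : y x * (y x)⁻¹ = 1 := mul_inv_cancel₀ (by linarith)
  have hnn : 0 ≤ -(y x)⁻¹ := by rw [← inv_neg]; exact (inv_pos.2 hpos).le
  simp only [Fin.sum_univ_two, Matrix.cons_val_zero, Matrix.cons_val_one] at hsplit
  push_cast at hsplit
  rcases hsplit with hs | hs
  · have hq := hK hz hx hle hnn (by ring)
    refine absurd (ha _ hq ?_).1 (not_lt.2 ?_)
    · simp only [hy, Pi.add_apply, Pi.smul_apply, smul_eq_mul] at hinv ⊢
      linear_combination -hinv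
    · have hs' : ξ x + a * y x ≤ 0 := by simp only [hξ, hy]; linarith
      have : ξ ((1 + (y x)⁻¹) • (fun j => (z j : ℝ)) + -(y x)⁻¹ • x) = -(y x)⁻¹ * ξ x := by
        simp only [hξ, Pi.add_apply, Pi.smul_apply, smul_eq_mul]; ring
      rw [this]
      linear_combination mul_le_mul_of_nonneg_left hs' hnn + a * hinv
  · have hq := hK hzd hx hle hnn (by ring)
    refine absurd (ha _ hq ?_).2 (not_lt.2 ?_)
    · simp only [hy, Pi.add_apply, Pi.smul_apply, smul_eq_mul] at hinv ⊢
      push_cast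
      linear_combination -hinv
    · have hs' : 1 ≤ ξ x + a * y x := by simp only [hξ, hy]; linarith
      have : ξ ((1 + (y x)⁻¹) • (fun j => ((z j + d j : ℤ) : ℝ)) + -(y x)⁻¹ • x)
          = (1 + (y x)⁻¹) + -(y x)⁻¹ * ξ x := by
        simp only [hξ, Pi.add_apply, Pi.smul_apply, smul_eq_mul]
        push_cast
        linear_combination (1 + (y x)⁻¹) * huR
      rw [this]
      linear_combination mul_le_mul_of_nonneg_left hs' hnn - a * hinv

theorem convex_relaxP (k : ℕ) (r : Fin k → Pt) (f : Pt) : Convex ℝ (relaxP k r f) := by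
  rintro p ⟨hp, hp'⟩ q ⟨hq, hq'⟩ a b ha hb hab
  refine ⟨fun i => ?_, ?_⟩
  · exact add_nonneg (mul_nonneg ha (hp i)) (mul_nonneg hb (hq i))
  · simp only [Prod.fst_add, Prod.smul_fst, Prod.snd_add, Prod.smul_snd, hp', hq', Pi.add_apply,
      Pi.smul_apply, smul_eq_mul, add_smul, Finset.sum_add_distrib, smul_add, Finset.smul_sum,
      mul_smul]
    have : f = a • f + b • f := by rw [← add_smul, hab, one_smul]
    nth_rewrite 3 [this]
    abel

theorem isClosed_relaxP (k : ℕ) (r : Fin k → Pt) (f : Pt) : IsClosed (relaxP k r f) := by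
  have h1 : IsClosed {p : Pt × (Fin k → ℝ) | ∀ i, 0 ≤ p.2 i} := by
    simp only [ofPred_forall]
    exact isClosed_iInter fun i => isClosed_le (by fun_prop) (by fun_prop)
  exact h1.inter (isClosed_eq (by fun_prop) (by fun_prop))

theorem splitClosure_subset_of_convex {k : ℕ} {C D : Set (Pt × (Fin k → ℝ))} (hD : Convex ℝ D)
    (π : Fin 2 → ℤ) (π₀ : ℤ)
    (h : ∀ p ∈ C, (∑ j, (π j : ℝ) * p.1 j ≤ π₀ ∨ (π₀ : ℝ) + 1 ≤ ∑ j, (π j : ℝ) * p.1 j) →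
      p ∈ D) :
    splitClosure k C ⊆ D := by
  refine (iInter₂_subset π π₀).trans (convexHull_min ?_ hD)
  rintro p (⟨hp, hp'⟩ | ⟨hp, hp'⟩)
  · exact h p hp (Or.inl hp')
  · exact h p hp (Or.inr hp')

theorem splitRank_le {k : ℕ} {r : Fin k → Pt} {f : Pt} {α : Fin k → ℝ} {γ : ℝ} {n : ℕ}
    (h : ∀ p ∈ closures k r f n, γ ≤ ∑ i, α i * p.2 i) : splitRank k r f α γ ≤ n :=
  sInf_le ⟨n, rfl, h⟩

theorem convex_sum_ge {k : ℕ} (α : Fin k → ℝ) (γ : ℝ) :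
    Convex ℝ {p : Pt × (Fin k → ℝ) | γ ≤ ∑ i, α i * p.2 i} := by
  refine convex_halfSpace_ge ⟨fun x y => ?_, fun c x => ?_⟩ γ
  · simp [mul_add, Finset.sum_add_distrib]
  · simp [Finset.mul_sum, mul_left_comm]

theorem IsRatPt.exists_nat_mul_eq_int {x : Pt} (hx : IsRatPt x) :
    ∃ N : ℕ, 0 < N ∧ ∀ j, ∃ z : ℤ, (N : ℝ) * x j = z := by
  choose q hq using hx
  refine ⟨(q 0).den * (q 1).den, Nat.mul_pos (q 0).den_pos (q 1).den_pos, fun j => ?_⟩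
  have h : ∀ i, ((q i).den : ℝ) * x i = (q i).num := fun i => by
    rw [hq, mul_comm]; exact_mod_cast Rat.mul_den_eq_num (q i)
  fin_cases j
  · refine ⟨(q 0).num * (q 1).den, ?_⟩
    push_cast
    linear_combination ((q 1).den : ℝ) * h 0
  · refine ⟨(q 1).num * (q 0).den, ?_⟩
    push_cast
    linear_combination ((q 0).den : ℝ) * h 1

theorem exists_pos_coprime_mul {a b : ℤ} (h : a ≠ 0 ∨ b ≠ 0) :
    ∃ (g : ℝ) (d : Fin 2 → ℤ), 0 < g ∧ IsCoprime (d 0) (d 1) ∧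
      (a : ℝ) = g * d 0 ∧ (b : ℝ) = g * d 1 ∧ 1 ≤ g := by
  obtain ⟨g, m, n, hg, hmn, ha, hb⟩ := Int.exists_gcd_one' (Int.gcd_pos_iff.2 h)
  refine ⟨g, ![m, n], by exact_mod_cast hg, Int.isCoprime_iff_gcd_eq_one.2 hmn, ?_, ?_,
    by exact_mod_cast hg⟩
  · rw [ha]; simp [mul_comm]
  · rw [hb]; simp [mul_comm]

/-- If the two rays are parallel, a single split proves every valid inequality with nonnegative
coefficients. -/
theorem splitRank_le_one_of_parallel {r : Fin 2 → Pt} {f : Pt} (hr_rat : ∀ i, IsRatPt (r i))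
    (hr_ne : ∀ i, r i ≠ 0) (hf_int : ¬ IsIntPt f) (hne : (mixedP 2 r f).Nonempty)
    {α : Fin 2 → ℝ} (hα : ∀ i, 0 ≤ α i) (hvalid : ValidIneq 2 r f α 1)
    (hdet : r 0 0 * r 1 1 - r 0 1 * r 1 0 = 0) :
    splitRank 2 r f α 1 ≤ 1 := by
  obtain ⟨d, u0, u1, l0, l1, hu, h0, h1⟩ : ∃ (d : Fin 2 → ℤ) (u0 u1 : ℤ) (l0 l1 : ℝ),
      (u0 : ℝ) * d 0 + u1 * d 1 = 1 ∧ (∀ j, r 0 j = l0 * d j) ∧ ∀ j, r 1 j = l1 * d j := by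
    obtain ⟨N, hN, hNr⟩ := (hr_rat 0).exists_nat_mul_eq_int
    choose e he using hNr
    have hNR : (0 : ℝ) < N := by exact_mod_cast hN
    have hene : e 0 ≠ 0 ∨ e 1 ≠ 0 := by
      by_contra! hc
      refine hr_ne 0 (funext fun j => ?_)
      have := he j
      fin_cases j
      · simpa [hc.1, hNR.ne'] using this
      · simpa [hc.2, hNR.ne'] using this
    obtain ⟨g, d, hg, ⟨u0, u1, hu⟩, hd0, hd1, -⟩ := exists_pos_coprime_mul hene
    have hu' : (u0 : ℝ) * d 0 + u1 * d 1 = 1 := by exact_mod_cast hu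
    have hr0 : r 0 0 = g / N * d 0 := by field_simp; rw [mul_comm, he, hd0]
    have hr1 : r 0 1 = g / N * d 1 := by field_simp; rw [mul_comm, he, hd1]
    have hpar : (d 0 : ℝ) * r 1 1 = d 1 * r 1 0 := by
      rw [hr0, hr1] at hdet
      refine mul_left_cancel₀ (div_pos hg hNR).ne' ?_
      linear_combination hdet
    refine ⟨d, u0, u1, g / N, u0 * r 1 0 + u1 * r 1 1, hu', fun j => ?_, fun j => ?_⟩
    · fin_cases j
      · exact hr0
      · exact hr1
    · fin_cases j
      · change r 1 0 = (u0 * r 1 0 + u1 * r 1 1) * d 0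
        linear_combination -r 1 0 * hu' - u1 * hpar
      · change r 1 1 = (u0 * r 1 0 + u1 * r 1 1) * d 1
        linear_combination -r 1 1 * hu' + u0 * hpar
  obtain ⟨m, hm, -, hmf⟩ := hne
  choose z hz using hm
  set σ := m.2 0 * l0 + m.2 1 * l1 with hσ
  have hf : ∀ j, f j = z j - σ * d j := by
    intro j
    have := congrFun hmf j
    simp only [Fin.sum_univ_two, Pi.add_apply, Pi.smul_apply, smul_eq_mul, h0, h1, hz] at this
    linear_combination -this
  set t := (u0 : ℝ) * f 0 + u1 * f 1 with ht
  have htσ : t = u0 * z 0 + u1 * z 1 - σ := by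
    rw [ht, hf, hf]; linear_combination -σ * hu
  have hnear : ∀ (n : ℤ) (s : Fin 2 → ℝ) (θ : ℝ), (∀ i, 0 ≤ s i) → 0 ≤ θ → θ ≤ 1 →
      θ * (s 0 * l0 + s 1 * l1) = n - t → 1 ≤ ∑ i, α i * s i := by
    intro n s θ hs hθ0 hθ1 hθ
    have hv := hvalid (f + ∑ i, (θ • s) i • r i, θ • s)
      ⟨fun j => ⟨z j + (n - u0 * z 0 - u1 * z 1) * d j, ?_⟩,
        fun i => mul_nonneg hθ0 (hs i), rfl⟩
    · refine hv.trans (Finset.sum_le_sum fun i _ => mul_le_mul_of_nonneg_left ?_ (hα i))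
      exact mul_le_of_le_one_left (hs i) hθ1
    · simp only [Fin.sum_univ_two, Pi.add_apply, Pi.smul_apply, smul_eq_mul, h0, h1, hf]
      push_cast
      linear_combination (d j : ℝ) * hθ - d j * htσ
  have hflt : (⌊t⌋ : ℝ) < t := by
    refine lt_of_le_of_ne (Int.floor_le t) fun heq => hf_int fun j => ?_
    refine ⟨z j - (u0 * z 0 + u1 * z 1 - ⌊t⌋) * d j, ?_⟩
    rw [hf]
    push_cast
    linear_combination -(d j : ℝ) * heq - d j * htσ
  have hlt := Int.lt_floor_add_one t
  refine splitRank_le (n := 1) (splitClosure_subset_of_convex (convex_sum_ge α 1)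
    ![u0, u1] ⌊t⌋ ?_)
  rintro p ⟨hp, hpf⟩ hs
  have hval : ∑ j, ((![u0, u1] j : ℤ) : ℝ) * p.1 j = t + (p.2 0 * l0 + p.2 1 * l1) := by
    rw [hpf]
    simp only [Fin.sum_univ_two, Pi.add_apply, Pi.smul_apply, smul_eq_mul, h0, h1,
      Matrix.cons_val_zero, Matrix.cons_val_one]
    linear_combination (p.2 0 * l0 + p.2 1 * l1) * hu
  rw [hval] at hs
  set τ := p.2 0 * l0 + p.2 1 * l1 with hτ
  rcases hs with hs | hs
  · have hneg : τ < 0 := by linarith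
    refine hnear ⌊t⌋ p.2 ((⌊t⌋ - t) / τ) hp (div_nonneg_of_nonpos (by linarith) hneg.le) ?_
      (div_mul_cancel₀ _ hneg.ne)
    rw [div_le_one_of_neg hneg]; linarith
  · have hpos : 0 < τ := by linarith
    refine hnear (⌊t⌋ + 1) p.2 ((⌊t⌋ + 1 - t) / τ) hp (div_nonneg (by linarith) hpos.le) ?_
      (by push_cast; exact div_mul_cancel₀ _ hpos.ne')
    rw [div_le_one hpos]; linarith

theorem splitRank_le_two_of_tight_of_pos {r : Fin 2 → Pt} {f : Pt} {α : Fin 2 → ℝ}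
    (hvalid : ValidIneq 2 r f α 1) {p q : Pt × (Fin 2 → ℝ)}
    (hp : p ∈ mixedP 2 r f) (hq : q ∈ mixedP 2 r f) (hpt : ∑ i, α i * p.2 i = 1) {c : ℝ}
    (hc : 0 < c)
    (h : ∀ i, (q.1 0 - p.1 0) * r i 1 - (q.1 1 - p.1 1) * r i 0 = c * α i) :
    splitRank 2 r f α 1 ≤ 2 := by
  obtain ⟨z, hz⟩ := Classical.skolem.1 hp.1
  obtain ⟨w, hw⟩ := Classical.skolem.1 hq.1
  have hpe : p.1 = fun j => (z j : ℝ) := funext hz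
  have hqe : q.1 = fun j => (w j : ℝ) := funext hw
  have hne : w 0 - z 0 ≠ 0 ∨ w 1 - z 1 ≠ 0 := by
    by_contra! hcon
    have e0 : q.1 0 - p.1 0 = 0 := by rw [hz, hw]; exact_mod_cast hcon.1
    have e1 : q.1 1 - p.1 1 = 0 := by rw [hz, hw]; exact_mod_cast hcon.2
    have hα0 : ∀ i, α i = 0 := fun i => by
      simpa [e0, e1, hc.ne'] using h i
    simp [hα0] at hpt
  obtain ⟨g, d, hg, hd, hd0, hd1, hg1⟩ := exists_pos_coprime_mul hne
  push_cast at hd0 hd1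
  have hkey : ∀ x ∈ relaxP 2 r f, g * ((d 0 : ℝ) * (x.1 1 - z 1) - d 1 * (x.1 0 - z 0))
      = c * (∑ i, α i * x.2 i - 1) := by
    rintro x ⟨-, hx⟩
    have hx0 := congrFun hx 0
    have hx1 := congrFun hx 1
    have hp0 := congrFun hp.2.2 0
    have hp1 := congrFun hp.2.2 1
    have h0 := h 0
    have h1 := h 1
    simp only [Fin.sum_univ_two, Pi.add_apply, Pi.smul_apply, smul_eq_mul, hz, hw]
      at hx0 hx1 hp0 hp1 h0 h1 hpt ⊢
    linear_combination (z 1 - x.1 1) * hd0 - (z 0 - x.1 0) * hd1 +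
      ((w 0 : ℝ) - z 0) * (hx1 - hp1) - ((w 1 : ℝ) - z 1) * (hx0 - hp0) +
      (x.2 0 - p.2 0) * h0 + (x.2 1 - p.2 1) * h1 - c * hpt
  have hK : Convex ℝ (Prod.fst '' relaxP 2 r f) :=
    (convex_relaxP 2 r f).linear_image (LinearMap.fst ℝ Pt (Fin 2 → ℝ))
  have hzK : (fun j => (z j : ℝ)) ∈ Prod.fst '' relaxP 2 r f := ⟨p, hp.2, hpe⟩
  have hwK : (fun j => (w j : ℝ)) ∈ Prod.fst '' relaxP 2 r f := ⟨q, hq.2, hqe⟩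
  have hzdK : (fun j => ((z j + d j : ℤ) : ℝ)) ∈ Prod.fst '' relaxP 2 r f := by
    have := hK hzK hwK (a := 1 - g⁻¹) (b := g⁻¹) (sub_nonneg.2 (inv_le_one_of_one_le₀ hg1))
      (inv_pos.2 hg).le (by ring)
    convert this using 1
    have hgi : g * g⁻¹ = 1 := mul_inv_cancel₀ hg.ne'
    funext j
    simp only [Pi.add_apply, Pi.smul_apply, smul_eq_mul]
    push_cast
    fin_cases j
    · change (z 0 : ℝ) + d 0 = (1 - g⁻¹) * z 0 + g⁻¹ * w 0
      linear_combination -g⁻¹ * hd0 - d 0 * hgi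
    · change (z 1 : ℝ) + d 1 = (1 - g⁻¹) * z 1 + g⁻¹ * w 1
      linear_combination -g⁻¹ * hd1 - d 1 * hgi
  obtain ⟨π, π₀, hsplit⟩ := exists_split_of_adjacent hK hd hzK hzdK (by
    rintro m ⟨x, hx, hxm⟩ hy
    have hv := hvalid x ⟨fun j => ⟨m j, congrFun hxm j⟩, hx⟩
    have hk := hkey x hx
    have hyR : (d 0 : ℝ) * (x.1 1 - z 1) - d 1 * (x.1 0 - z 0) = -1 := by
      rw [hxm]; dsimp only; exact_mod_cast hy
    rw [hyR] at hk
    nlinarith)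
  have hD : Convex ℝ {x : Pt × (Fin 2 → ℝ) |
      -1 < (d 0 : ℝ) * (x.1 1 - z 1) - d 1 * (x.1 0 - z 0)} := by
    intro x hx y hy a b ha hb hab
    simp only [mem_ofPred_eq, Prod.fst_add, Prod.smul_fst, Pi.add_apply, Pi.smul_apply,
      smul_eq_mul] at *
    rcases ha.eq_or_lt with rfl | ha'
    · obtain rfl : b = 1 := by linarith
      linarith
    · obtain rfl : b = 1 - a := by linarith
      nlinarith [mul_lt_mul_of_pos_left hx ha', mul_le_mul_of_nonneg_left hy.le hb]
  have hfirst : closures 2 r f 1 ⊆ relaxP 2 r f ∩ {x |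
      -1 < (d 0 : ℝ) * (x.1 1 - z 1) - d 1 * (x.1 0 - z 0)} :=
    splitClosure_subset_of_convex ((convex_relaxP 2 r f).inter hD) π π₀
      fun x hx hs => ⟨hx, hsplit x.1 ⟨x, hx, rfl⟩ hs⟩
  refine splitRank_le (n := 2) (splitClosure_subset_of_convex (convex_sum_ge α 1)
    ![-d 1, d 0] (-d 1 * z 0 + d 0 * z 1 - 1) fun x hx hs => ?_)
  obtain ⟨hxr, hxy⟩ := hfirst hx
  have hk := hkey x hxr
  change 1 ≤ ∑ i, α i * x.2 i
  simp only [mem_ofPred_eq, Fin.sum_univ_two, Matrix.cons_val_zero, Matrix.cons_val_one]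
    at hs hxy hk ⊢
  push_cast at hs
  rcases hs with hs | hs
  · linarith
  · have : 0 ≤ g * ((d 0 : ℝ) * (x.1 1 - z 1) - d 1 * (x.1 0 - z 0)) :=
      mul_nonneg hg.le (by linarith)
    rw [hk] at this
    linarith [(mul_nonneg_iff_of_pos_left hc).1 this]

/-- If two distinct points of `P(R,f)` are tight for a valid inequality and the rays are linearly
independent, two rounds of splits prove the inequality. -/
theorem splitRank_le_two_of_tight {r : Fin 2 → Pt} {f : Pt} {α : Fin 2 → ℝ}
    (hvalid : ValidIneq 2 r f α 1)
    (hdet : r 0 0 * r 1 1 - r 0 1 * r 1 0 ≠ 0) {p q : Pt × (Fin 2 → ℝ)}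
    (hp : p ∈ mixedP 2 r f) (hq : q ∈ mixedP 2 r f) (hpq : p ≠ q)
    (hpt : ∑ i, α i * p.2 i = 1) (hqt : ∑ i, α i * q.2 i = 1) :
    splitRank 2 r f α 1 ≤ 2 := by
  have hp' := hp.2.2
  have hq' := hq.2.2
  set D := r 0 0 * r 1 1 - r 0 1 * r 1 0 with hD
  set c := D * ((q.2 0 - p.2 0) * α 1 - (q.2 1 - p.2 1) * α 0) / (α 0 ^ 2 + α 1 ^ 2) with hc
  have hpt' := hpt
  have hqt' := hqt
  simp only [Fin.sum_univ_two] at hpt' hqt'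
  have hn : 0 < α 0 ^ 2 + α 1 ^ 2 := by
    rcases eq_or_ne (α 0) 0 with h0 | h0
    · have : α 1 ≠ 0 := fun h1 => by simp [h0, h1] at hpt'
      positivity
    · positivity
  have hc0 : -(q.2 1 - p.2 1) * D = c * α 0 := by
    rw [hc]; field_simp
    linear_combination -α 1 * (hqt' - hpt')
  have hc1 : (q.2 0 - p.2 0) * D = c * α 1 := by
    rw [hc]; field_simp
    linear_combination α 0 * (hqt' - hpt')
  have hcoef : ∀ i, (q.1 0 - p.1 0) * r i 1 - (q.1 1 - p.1 1) * r i 0 = c * α i := by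
    intro i
    rw [hp', hq']
    simp only [Fin.sum_univ_two, Pi.add_apply, Pi.smul_apply, smul_eq_mul]
    fin_cases i
    · rw [Fin.zero_eta, ← hc0]; ring
    · rw [Fin.mk_one, ← hc1]; ring
  rcases lt_trichotomy c 0 with hlt | h0 | hgt
  · exact splitRank_le_two_of_tight_of_pos hvalid hq hp hqt (neg_pos.2 hlt)
      fun i => by linear_combination -hcoef i
  · rw [h0, zero_mul] at hc0 hc1
    have e0 : q.2 0 = p.2 0 := sub_eq_zero.1 ((mul_eq_zero.1 hc1).resolve_right hdet)
    have e1 : q.2 1 = p.2 1 :=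
      sub_eq_zero.1 (neg_eq_zero.1 ((mul_eq_zero.1 hc0).resolve_right hdet))
    refine absurd (Prod.ext ?_ (funext fun i => ?_)) hpq
    · rw [hp', hq', Fin.sum_univ_two, Fin.sum_univ_two, e0, e1]
    · fin_cases i
      · exact e0.symm
      · exact e1.symm
  · exact splitRank_le_two_of_tight_of_pos hvalid hp hq hpt hgt hcoef

theorem exists_nat_mul_rays_eq_int {r : Fin 2 → Pt} (hr_rat : ∀ i, IsRatPt (r i)) :
    ∃ N : ℕ, 0 < N ∧ ∀ i j, ∃ z : ℤ, (N : ℝ) * r i j = z := by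
  obtain ⟨N₀, hN₀, h₀⟩ := (hr_rat 0).exists_nat_mul_eq_int
  obtain ⟨N₁, hN₁, h₁⟩ := (hr_rat 1).exists_nat_mul_eq_int
  refine ⟨N₀ * N₁, Nat.mul_pos hN₀ hN₁, fun i j => ?_⟩
  fin_cases i
  · obtain ⟨z, hz⟩ := h₀ j
    refine ⟨z * N₁, ?_⟩
    push_cast
    linear_combination (N₁ : ℝ) * hz
  · obtain ⟨z, hz⟩ := h₁ j
    refine ⟨z * N₀, ?_⟩
    push_cast
    linear_combination (N₀ : ℝ) * hz

theorem add_mem_mixedP {r : Fin 2 → Pt} {f : Pt} {N : ℕ}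
    (hN : ∀ i j, ∃ z : ℤ, (N : ℝ) * r i j = z) {p : Pt × (Fin 2 → ℝ)}
    (hp : p ∈ mixedP 2 r f) (i : Fin 2) :
    p + ((N : ℝ) • r i, (N : ℝ) • Pi.single i 1) ∈ mixedP 2 r f := by
  refine ⟨fun j => ?_, fun l => ?_, ?_⟩
  · obtain ⟨a, ha⟩ := hp.1 j
    obtain ⟨b, hb⟩ := hN i j
    exact ⟨a + b, by simp [ha, hb]⟩
  · refine add_nonneg (hp.2.1 l) (mul_nonneg N.cast_nonneg ?_)
    rw [Pi.single_apply]; split_ifs <;> norm_num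
  · have : ∑ l, ((N : ℝ) • (Pi.single i 1 : Fin 2 → ℝ)) l • r l = (N : ℝ) • r i := by
      simp [Pi.single_apply, ite_smul]
    simp only [Prod.fst_add, Prod.snd_add, Pi.add_apply, add_smul, Finset.sum_add_distrib, this]
    rw [hp.2.2, add_assoc]

theorem two_le_affDim_convexHull_mixedP {r : Fin 2 → Pt} {f : Pt}
    (hr_rat : ∀ i, IsRatPt (r i)) (hne : (mixedP 2 r f).Nonempty) :
    2 ≤ affDim (convexHull ℝ (mixedP 2 r f)) := by
  obtain ⟨N, hN, hNr⟩ := exists_nat_mul_rays_eq_int hr_rat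
  obtain ⟨p, hp⟩ := hne
  let G : (Fin 2 → ℝ) →ₗ[ℝ] Pt × (Fin 2 → ℝ) :=
    (Fintype.linearCombination ℝ r).prod LinearMap.id
  have hG : Function.Injective G := fun s t hst => congrArg Prod.snd hst
  have hrange : LinearMap.range G ≤ vectorSpan ℝ (convexHull ℝ (mixedP 2 r f)) := by
    rintro _ ⟨s, rfl⟩
    have hs : s = ∑ i, s i • Pi.single i (1 : ℝ) := by
      ext j; simp [Pi.single_apply]
    rw [hs, map_sum]
    refine Submodule.sum_mem _ fun i _ => ?_
    rw [map_smul]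
    refine Submodule.smul_mem _ _ ?_
    have hmem := vsub_mem_vectorSpan ℝ (subset_convexHull ℝ _ (add_mem_mixedP hNr hp i))
      (subset_convexHull ℝ _ hp)
    rw [vsub_eq_sub, add_sub_cancel_left] at hmem
    have := Submodule.smul_mem _ (N : ℝ)⁻¹ hmem
    have hN0 : (N : ℝ) ≠ 0 := by exact_mod_cast hN.ne'
    rw [← Prod.smul_mk, smul_smul, inv_mul_cancel₀ hN0, one_smul] at this
    simpa [G, Fintype.linearCombination_apply_single] using this
  have := Submodule.finrank_mono hrange
  rwa [LinearMap.finrank_range_of_inj hG, Module.finrank_fin_fun, ← direction_affineSpan] at this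

theorem exists_pos_mul_eq_nat {r : Fin 2 → Pt} {f : Pt} (hr_rat : ∀ i, IsRatPt (r i))
    (hf_rat : IsRatPt f) (hdet : r 0 0 * r 1 1 - r 0 1 * r 1 0 ≠ 0) :
    ∃ M : ℝ, 0 < M ∧ ∀ p ∈ mixedP 2 r f, ∃ n : Fin 2 → ℕ, ∀ i, M * p.2 i = n i := by
  obtain ⟨N, hN, hNr⟩ := exists_nat_mul_rays_eq_int hr_rat
  obtain ⟨L, hL, hLf⟩ := hf_rat.exists_nat_mul_eq_int
  choose ρ hρ using hNr
  choose φ hφ using hLf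
  have hNR : (0 : ℝ) < N := by exact_mod_cast hN
  have hLR : (0 : ℝ) < L := by exact_mod_cast hL
  set D := r 0 0 * r 1 1 - r 0 1 * r 1 0 with hD
  refine ⟨|(N : ℝ) * L * D|, abs_pos.2 (by positivity), fun p hp => ?_⟩
  obtain ⟨z, hz⟩ := Classical.skolem.1 hp.1
  have e0 := congrFun hp.2.2 0
  have e1 := congrFun hp.2.2 1
  simp only [Fin.sum_univ_two, Pi.add_apply, Pi.smul_apply, smul_eq_mul] at e0 e1
  have key : ∀ i, ∃ w : ℤ, (N : ℝ) * L * D * p.2 i = w := by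
    intro i
    fin_cases i
    · refine ⟨(L * z 0 - φ 0) * ρ 1 1 - (L * z 1 - φ 1) * ρ 1 0, ?_⟩
      push_cast
      rw [← hρ, ← hρ, ← hφ, ← hφ, ← hz, ← hz, e0, e1]
      ring
    · refine ⟨(L * z 1 - φ 1) * ρ 0 0 - (L * z 0 - φ 0) * ρ 0 1, ?_⟩
      push_cast
      rw [← hρ, ← hρ, ← hφ, ← hφ, ← hz, ← hz, e0, e1]
      ring
  choose w hw using key
  refine ⟨fun i => (w i).natAbs, fun i => ?_⟩
  rw [← abs_of_nonneg (hp.2.1 i), ← abs_mul, hw, Nat.cast_natAbs, Int.cast_abs]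

/-- Every point of `P(R,f)` lies coordinatewise above one of finitely many points of `P(R,f)`. -/
theorem exists_finite_dominating {r : Fin 2 → Pt} {f : Pt} (hr_rat : ∀ i, IsRatPt (r i))
    (hf_rat : IsRatPt f) (hdet : r 0 0 * r 1 1 - r 0 1 * r 1 0 ≠ 0) :
    ∃ B ⊆ mixedP 2 r f, B.Finite ∧ ∀ p ∈ mixedP 2 r f, ∃ b ∈ B, ∀ i, b.2 i ≤ p.2 i := by
  obtain ⟨M, hM, hdisc⟩ := exists_pos_mul_eq_nat hr_rat hf_rat hdet
  let T : (Fin 2 → ℕ) → Prop := fun n => ∃ p ∈ mixedP 2 r f, ∀ i, M * p.2 i = n i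
  have hfin : {n | Minimal T n}.Finite :=
    WellQuasiOrderedLE.finite_of_isAntichain (setOfPred_minimal_antichain _)
  choose! g hgP hg using fun n (hn : Minimal T n) => hn.prop
  refine ⟨g '' {n | Minimal T n}, image_subset_iff.2 fun n hn => hgP n hn, hfin.image g,
    fun p hp => ?_⟩
  obtain ⟨n, hn⟩ := hdisc p hp
  obtain ⟨m, hmn, hm⟩ := exists_minimal_le_of_wellFoundedLT T n ⟨p, hp, hn⟩
  refine ⟨g m, ⟨m, hm, rfl⟩, fun i => le_of_mul_le_mul_left ?_ hM⟩
  rw [hg m hm, hn]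
  exact_mod_cast hmn i

theorem exists_pos_forall_mul_le {ι : Type*} {B : Set ι} (hB : B.Finite) (g h : ι → ℝ)
    (hh : ∀ b ∈ B, 0 < h b) : ∃ c > 0, ∀ b ∈ B, c * g b ≤ h b := by
  have hev : ∀ᶠ c in nhdsWithin (0 : ℝ) (Ioi 0), ∀ b ∈ B, c * g b ≤ h b := by
    refine (Filter.eventually_all_finite hB).2 fun b hb => ?_
    have ht : Filter.Tendsto (fun c : ℝ => c * g b) (nhdsWithin 0 (Ioi 0)) (nhds (0 * g b)) :=
      ((continuous_mul_const (g b)).tendsto 0).mono_left nhdsWithin_le_nhds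
    exact ht.eventually_le_const (by simpa using hh b hb)
  obtain ⟨c, hc, hc0⟩ := (hev.and self_mem_nhdsWithin).exists
  exact ⟨c, hc0, hc⟩

/-- If `e` is the only tight point of `P(R,f)` for an inequality with positive coefficients, the
slack grows at least linearly with the distance to `e`. -/
theorem exists_slack_ge_of_unique_tight {r : Fin 2 → Pt} {f : Pt} (hr_rat : ∀ i, IsRatPt (r i))
    (hf_rat : IsRatPt f) (hdet : r 0 0 * r 1 1 - r 0 1 * r 1 0 ≠ 0) {α : Fin 2 → ℝ}
    (hα : ∀ i, 0 < α i) (hvalid : ValidIneq 2 r f α 1) {e : Pt × (Fin 2 → ℝ)}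
    (het : ∑ i, α i * e.2 i = 1)
    (huniq : ∀ p ∈ mixedP 2 r f, ∑ i, α i * p.2 i = 1 → p = e) :
    ∃ c > 0, ∀ p ∈ mixedP 2 r f, c * ∑ i, |p.2 i - e.2 i| ≤ ∑ i, α i * p.2 i - 1 := by
  obtain ⟨B, hBP, hBfin, hB⟩ := exists_finite_dominating hr_rat hf_rat hdet
  obtain ⟨c, hc, hcB⟩ := exists_pos_forall_mul_le (hBfin.subset sdiff_subset : (B \ {e}).Finite)
    (fun b => ∑ i, |b.2 i - e.2 i|) (fun b => ∑ i, α i * b.2 i - 1) fun b hb =>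
      sub_pos.2 (lt_of_le_of_ne (hvalid b (hBP hb.1)) fun h => hb.2 (huniq b (hBP hb.1) h.symm))
  refine ⟨min c (min (α 0) (α 1)), lt_min hc (lt_min (hα 0) (hα 1)), fun p hp => ?_⟩
  set c' := min c (min (α 0) (α 1)) with hc'
  have hc'0 : 0 < c' := lt_min hc (lt_min (hα 0) (hα 1))
  have hα' : ∀ i, c' ≤ α i := fun i => by
    fin_cases i
    · exact (min_le_right _ _).trans (min_le_left _ _)
    · exact (min_le_right _ _).trans (min_le_right _ _)
  obtain ⟨b, hb, hbp⟩ := hB p hp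
  have hb' : c' * ∑ i, |b.2 i - e.2 i| ≤ ∑ i, α i * b.2 i - 1 := by
    by_cases hbe : b = e
    · simp [hbe, het]
    · exact (mul_le_mul_of_nonneg_right (min_le_left _ _)
        (Finset.sum_nonneg fun i _ => abs_nonneg _)).trans (hcB b ⟨hb, hbe⟩)
  have hstep : ∀ i, c' * |p.2 i - e.2 i| ≤ c' * |b.2 i - e.2 i| + α i * (p.2 i - b.2 i) := by
    intro i
    have h1 : |p.2 i - e.2 i| ≤ |b.2 i - e.2 i| + (p.2 i - b.2 i) := by
      have := abs_add_le (b.2 i - e.2 i) (p.2 i - b.2 i)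
      rw [abs_of_nonneg (sub_nonneg.2 (hbp i))] at this
      rwa [add_comm, sub_add_sub_cancel] at this
    nlinarith [mul_le_mul_of_nonneg_left h1 hc'0.le,
      mul_le_mul_of_nonneg_right (hα' i) (sub_nonneg.2 (hbp i))]
  simp only [Fin.sum_univ_two] at hb' ⊢
  linarith [hstep 0, hstep 1]

theorem exists_tight_pair_of_isFacet {r : Fin 2 → Pt} {f : Pt} (hr_rat : ∀ i, IsRatPt (r i))
    (hf_rat : IsRatPt f) (hne : (mixedP 2 r f).Nonempty)
    {α : Fin 2 → ℝ} (hα : ∀ i, 0 ≤ α i) (hfacet : IsFacet 2 r f α 1)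
    (hdet : r 0 0 * r 1 1 - r 0 1 * r 1 0 ≠ 0) :
    ∃ p ∈ mixedP 2 r f, ∃ q ∈ mixedP 2 r f, p ≠ q ∧
      ∑ i, α i * p.2 i = 1 ∧ ∑ i, α i * q.2 i = 1 := by
  obtain ⟨hvalid, hdim⟩ := hfacet
  set F := {p ∈ closure (convexHull ℝ (mixedP 2 r f)) | ∑ i, α i * p.2 i = 1} with hF
  have hFns : ¬ F.Subsingleton := by
    intro hsub
    have h2 := two_le_affDim_convexHull_mixedP (f := f) hr_rat hne
    have h0 : affDim F = 0 := by
      rw [affDim, direction_affineSpan, vectorSpan_of_subsingleton _ hsub, finrank_bot]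
    omega
  by_contra! hno
  apply hFns
  by_cases hex : ∃ e ∈ mixedP 2 r f, ∑ i, α i * e.2 i = 1
  · obtain ⟨e, he, het⟩ := hex
    have hpos : ∀ i, 0 < α i := by
      refine fun i => lt_of_le_of_ne (hα i) fun h0 => ?_
      obtain ⟨N, hN, hNr⟩ := exists_nat_mul_rays_eq_int hr_rat
      refine hno e he _ (add_mem_mixedP hNr he i) (fun heq => ?_) het ?_
      · have := congrFun (congrArg Prod.snd heq) i
        simp [hN.ne'] at this
      · rw [← het]
        simp [mul_add, Finset.sum_add_distrib, Pi.single_apply, ← h0]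
    obtain ⟨c, hc, hslack⟩ := exists_slack_ge_of_unique_tight hr_rat hf_rat hdet hpos hvalid het
      fun p hp hpt => by_contra fun hpe => hno p hp e he hpe hpt het
    have hsub : closure (convexHull ℝ (mixedP 2 r f)) ⊆ relaxP 2 r f ∩
        {p | c * ∑ i, |p.2 i - e.2 i| ≤ ∑ i, α i * p.2 i - 1} := by
      refine closure_minimal (convexHull_min (fun p hp => ⟨hp.2, hslack p hp⟩) ?_) ?_
      · refine (convex_relaxP 2 r f).inter ?_
        intro x hx y hy a b ha hb hab
        have key : ∀ i, |(a • x + b • y).2 i - e.2 i| ≤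
            a * |x.2 i - e.2 i| + b * |y.2 i - e.2 i| := by
          intro i
          have : (a • x + b • y).2 i - e.2 i = a * (x.2 i - e.2 i) + b * (y.2 i - e.2 i) := by
            simp only [Prod.snd_add, Prod.smul_snd, Pi.add_apply, Pi.smul_apply, smul_eq_mul]
            linear_combination e.2 i * hab
          rw [this]
          refine (abs_add_le _ _).trans_eq ?_
          rw [abs_mul, abs_mul, abs_of_nonneg ha, abs_of_nonneg hb]
        have k0 := mul_le_mul_of_nonneg_left (key 0) hc.le
        have k1 := mul_le_mul_of_nonneg_left (key 1) hc.le
        have hx' := mul_le_mul_of_nonneg_left hx ha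
        have hy' := mul_le_mul_of_nonneg_left hy hb
        simp only [mem_ofPred_eq, Fin.sum_univ_two, Prod.snd_add, Prod.smul_snd, Pi.add_apply,
          Pi.smul_apply, smul_eq_mul] at k0 k1 hx' hy' ⊢
        linarith
      · exact (isClosed_relaxP 2 r f).inter (isClosed_le (by fun_prop) (by fun_prop))
    have hFe : ∀ p ∈ F, p.2 = e.2 ∧ p.1 = f + ∑ i, p.2 i • r i := by
      rintro p ⟨hp, hpt⟩
      obtain ⟨hpr, hps⟩ := hsub hp
      rw [mem_ofPred_eq, hpt, sub_self] at hps
      have hz : ∑ i, |p.2 i - e.2 i| = 0 :=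
        le_antisymm (nonpos_of_mul_nonpos_right hps hc) (Finset.sum_nonneg fun i _ => abs_nonneg _)
      refine ⟨funext fun i => ?_, hpr.2⟩
      have := (Finset.sum_eq_zero_iff_of_nonneg fun i _ => abs_nonneg _).1 hz i (Finset.mem_univ i)
      exact sub_eq_zero.1 (abs_eq_zero.1 this)
    intro p hp q hq
    obtain ⟨hp2, hp1⟩ := hFe p hp
    obtain ⟨hq2, hq1⟩ := hFe q hq
    exact Prod.ext (by rw [hp1, hq1, hp2, hq2]) (hp2.trans hq2.symm)
  · push Not at hex
    obtain ⟨B, hBP, hBfin, hB⟩ := exists_finite_dominating hr_rat hf_rat hdet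
    obtain ⟨c, hc, hcB⟩ := exists_pos_forall_mul_le hBfin (fun _ => 1)
      (fun b => ∑ i, α i * b.2 i - 1) fun b hb =>
        sub_pos.2 (lt_of_le_of_ne (hvalid b (hBP hb)) (hex b (hBP hb)).symm)
    have hsub : closure (convexHull ℝ (mixedP 2 r f)) ⊆ {p | 1 + c ≤ ∑ i, α i * p.2 i} := by
      refine closure_minimal (convexHull_min (fun p hp => ?_) (convex_sum_ge α _))
        (isClosed_le (by fun_prop) (by fun_prop))
      obtain ⟨b, hb, hbp⟩ := hB p hp
      have h1 := hcB b hb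
      have h2 : ∑ i, α i * b.2 i ≤ ∑ i, α i * p.2 i :=
        Finset.sum_le_sum fun i _ => mul_le_mul_of_nonneg_left (hbp i) (hα i)
      rw [mem_ofPred_eq]
      linarith
    rintro p ⟨hp, hpt⟩
    have := hsub hp
    rw [mem_ofPred_eq, hpt] at this
    linarith

theorem two_variable_split_rank_le_two
    (r : Fin 2 → Pt) (f : Pt)
    (hr_rat : ∀ i, IsRatPt (r i)) (hr_ne : ∀ i, r i ≠ 0)
    (hf_rat : IsRatPt f) (hf_int : ¬ IsIntPt f)
    (hne : (mixedP 2 r f).Nonempty)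
    (α : Fin 2 → ℝ) (hα : ∀ i, 0 ≤ α i)
    (hfacet : IsFacet 2 r f α 1) :
    splitRank 2 r f α 1 ≤ (2 : ℕ∞) := by
  by_cases hdet : r 0 0 * r 1 1 - r 0 1 * r 1 0 = 0
  · exact (splitRank_le_one_of_parallel hr_rat hr_ne hf_int hne hα hfacet.1 hdet).trans
      (by norm_num)
  · obtain ⟨p, hp, q, hq, hpq, hpt, hqt⟩ :=
      exists_tight_pair_of_isFacet hr_rat hf_rat hne hα hfacet hdet
    exact splitRank_le_two_of_tight hfacet.1 hdet hp hq hpq hpt hqt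
end
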